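/- For each fixed integer p ≥ 0, the Taylor coefficients z_{p,q} of Z satisfy z_{p,q} ~ (a_p/Γ(−4/3)) · u_c^{−q} · q^{−7/3} as q → ∞, where Γ denotes the Gamma function. -/

import Mathlib

/-!
In the coordinate `H`, everything is rational. The closed unit disc contains no zero of `û` other
than `0`, and `|û| ≥ u_c` on the unit circle, with equality only at `H = 1`, a double critical
point. By Lagrange inversion the coefficients of a function of `u` are integrals over the unit
circle, so their size is controlled by the order of vanishing at `H = 1`; subtracting binomial
series `(1 - u / u_c) ^ (k / 3)`, of order `(1 - H) ^ k`, gives a transfer theorem.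

The first singular term at `H = 1` of the functions that occur is `ψ (1 - H) ^ 4`, of type
`(1 - u / u_c) ^ (4 / 3)`, and it produces `q ^ (-7 / 3)`. The pairs of value `φ` and singular
coefficient `ψ` multiply as the dual numbers `φ + ψ ε`, so the singular coefficients of `Z(u, v)` at
`v = u_c` are found by solving the functional equation over the dual numbers. That `A` solves it is
an identity between rational functions of `H`.
-/

noncomputable def nuc : ℝ := 1 + 2 * Real.sqrt 7

noncomputable def tc : ℝ := Real.sqrt 10 / (8 * (7 + Real.sqrt 7) ^ ((3:ℝ)/2))

noncomputable def uc : ℝ := (6/5) * (7 + Real.sqrt 7) * tc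

/-- The rational parametrization `û` of the `u`-variable. -/
noncomputable def uhat (H : ℂ) : ℂ :=
  ((uc : ℂ) / 3) * H * (10 - 12 * H + 6 * H ^ 2 - H ^ 3)

/-- The rational parametrization `Ẑ₀`. -/
noncomputable def Z0hat (H : ℂ) : ℂ :=
  (1/10) * (1 - (1 - (Real.sqrt 7 : ℂ)) * H + 3 * H ^ 2 - H ^ 3)
    * (10 - 12 * H + 6 * H ^ 2 - H ^ 3)

/-- The rational parametrization `Ẑ₁`. -/
noncomputable def Z1hat (H : ℂ) : ℂ :=
  (3 / (10 * (uc : ℂ))) *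
    ((Real.sqrt 7 : ℂ) - 1 + H - 3 * (4 - 3 * H + H ^ 2) / (10 - 12 * H + 6 * H ^ 2 - H ^ 3))

/-- The rational parametrization `Â`. -/
noncomputable def Ahat (H : ℂ) : ℂ :=
  (1/10) * ((((3:ℝ)/2) ^ ((7:ℝ)/3) : ℝ) : ℂ) * (9 - 8 * H + 3 * H ^ 2) / (3 - 3 * H + H ^ 2) ^ 2

open Filter Topology Asymptotics PowerSeries DualNumber
open Finset.HasAntidiagonal (antidiagonal mem_antidiagonal)

/-! ### Power series in a coordinate -/

/-- `F` is the sum of the series `f` in powers of `u`, close to `0` but not necessarily at `0`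
itself: leaving out the point makes the notion insensitive to removable singularities. -/
def HasSeriesIn (u : ℂ → ℂ) (f : ℂ⟦X⟧) (F : ℂ → ℂ) : Prop :=
  ∀ᶠ H in 𝓝[≠] 0, HasSum (fun n => coeff n f * u H ^ n) (F H)

section HasSeriesIn

variable {u F G : ℂ → ℂ} {f g : ℂ⟦X⟧}

theorem hasSeriesIn_C (c : ℂ) : HasSeriesIn u (C c) fun _ => c :=
  .of_forall fun H => by
    simpa using hasSum_single (f := fun n => coeff n (C c) * u H ^ n) 0
      fun n hn => by simp [coeff_C, hn]

theorem hasSeriesIn_X : HasSeriesIn u X u :=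
  .of_forall fun H => by
    simpa using hasSum_single (f := fun n => coeff n (X : ℂ⟦X⟧) * u H ^ n) 1
      fun n hn => by simp [coeff_X, hn]

namespace HasSeriesIn

theorem congr (hf : HasSeriesIn u f F) (h : F =ᶠ[𝓝[≠] 0] G) : HasSeriesIn u f G := by
  filter_upwards [hf, h] with H hF hFG
  rwa [← hFG]

theorem add (hf : HasSeriesIn u f F) (hg : HasSeriesIn u g G) :
    HasSeriesIn u (f + g) fun H => F H + G H := by
  filter_upwards [hf, hg] with H hF hG
  simpa [add_mul] using hF.add hG

theorem const_smul (c : ℂ) (hf : HasSeriesIn u f F) : HasSeriesIn u (c • f) fun H => c • F H := by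
  filter_upwards [hf] with H hF
  simpa [mul_assoc] using hF.mul_left c

theorem sub (hf : HasSeriesIn u f F) (hg : HasSeriesIn u g G) :
    HasSeriesIn u (f - g) fun H => F H - G H := by
  filter_upwards [hf, hg] with H hF hG
  simpa [sub_mul] using hF.sub hG

theorem mul (hf : HasSeriesIn u f F) (hg : HasSeriesIn u g G) :
    HasSeriesIn u (f * g) fun H => F H * G H := by
  filter_upwards [hf, hg] with H hF hG
  have hFn := hF.summable.norm
  have hGn := hG.summable.norm
  have key := (summable_norm_sum_mul_antidiagonal_of_summable_norm hFn hGn).of_norm.hasSum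
  rw [← tsum_mul_tsum_eq_tsum_sum_antidiagonal_of_summable_norm hFn hGn, hF.tsum_eq,
    hG.tsum_eq] at key
  refine key.congr_fun fun n => ?_
  rw [coeff_mul, Finset.sum_mul]
  refine Finset.sum_congr rfl fun kl hkl => ?_
  rw [← mem_antidiagonal.mp hkl, pow_add]
  ring

theorem exists_hasFPowerSeriesAt (hf : HasSeriesIn u f F)
    (hu : Tendsto u (𝓝[≠] 0) (𝓝[≠] 0)) :
    ∃ S : ℂ → ℂ, HasFPowerSeriesAt S (.ofScalars ℂ fun n => coeff n f) 0 ∧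
      F =ᶠ[𝓝[≠] 0] S ∘ u := by
  obtain ⟨H₀, hH₀, hne⟩ := (hf.and (hu self_mem_nhdsWithin)).exists
  set p : FormalMultilinearSeries ℂ ℂ ℂ := .ofScalars ℂ fun n => coeff n f with hp
  have hrad : 0 < p.radius := by
    refine lt_of_lt_of_le (b := (‖u H₀‖₊ : ENNReal)) (by simpa using hne) ?_
    refine p.le_radius_of_tendsto (l := 0) ?_
    refine squeeze_zero (fun n => by positivity) (fun n => ?_)
      hH₀.summable.norm.tendsto_atTop_zero
    rw [hp, FormalMultilinearSeries.ofScalars_norm, norm_mul, norm_pow, coe_nnnorm]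
  refine ⟨p.sum, (p.hasFPowerSeriesOnBall hrad).hasFPowerSeriesAt, ?_⟩
  filter_upwards [hf] with H hH
  rw [Function.comp_apply, FormalMultilinearSeries.sum, ← hH.tsum_eq]
  simp [hp, mul_comm]

theorem tendsto (hf : HasSeriesIn u f F) (hu : Tendsto u (𝓝[≠] 0) (𝓝[≠] 0)) :
    Tendsto F (𝓝[≠] 0) (𝓝 (coeff 0 f)) := by
  obtain ⟨S, hS, hFS⟩ := hf.exists_hasFPowerSeriesAt hu
  have hS0 : S 0 = coeff 0 f := by
    rw [← hS.coeff_zero fun _ => 0]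
    simp [FormalMultilinearSeries.ofScalars]
  rw [← hS0]
  exact (hS.continuousAt.tendsto.comp (hu.mono_right nhdsWithin_le_nhds)).congr' hFS.symm

theorem eq_zero (hf : HasSeriesIn u f 0) (hu : Tendsto u (𝓝[≠] 0) (𝓝[≠] 0)) : f = 0 := by
  obtain ⟨S, hS, hFS⟩ := hf.exists_hasFPowerSeriesAt hu
  have hfreq : ∃ᶠ w in 𝓝[≠] (0 : ℂ), S w = 0 :=
    hu.frequently (hFS.mono fun _ h => h.symm).frequently
  have hp := hS.locally_zero_iff.1 (hS.analyticAt.frequently_zero_iff_eventually_zero.1 hfreq)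
  ext n
  have hn := congrArg (fun p => p.coeff n) hp
  rw [FormalMultilinearSeries.coeff_ofScalars] at hn
  simpa [FormalMultilinearSeries.coeff] using hn

theorem unique (hf : HasSeriesIn u f F) (hg : HasSeriesIn u g F)
    (hu : Tendsto u (𝓝[≠] 0) (𝓝[≠] 0)) : f = g :=
  sub_eq_zero.1 (((hf.sub hg).congr (.of_forall fun _ => sub_self _)).eq_zero hu)

theorem shift (hf : HasSeriesIn u f F) (hu : Tendsto u (𝓝[≠] 0) (𝓝[≠] 0)) :
    HasSeriesIn u (mk fun n => coeff (n + 1) f) fun H => (F H - coeff 0 f) / u H := by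
  filter_upwards [hf, hu self_mem_nhdsWithin] with H hF huH
  have hu0 : u H ≠ 0 := huH
  have hdiv := ((hasSum_nat_add_iff' 1).2 hF).div_const (u H)
  simp only [Finset.sum_range_one, pow_zero, mul_one] at hdiv
  refine hdiv.congr_fun fun n => ?_
  rw [coeff_mk, pow_succ]
  field_simp

theorem of_hasSum_prod {z : ℕ → ℕ → ℂ} {v : ℂ} (hu : Tendsto u (𝓝[≠] 0) (𝓝[≠] 0))
    (h : ∀ᶠ H in 𝓝[≠] 0, HasSum (fun pq : ℕ × ℕ => z pq.1 pq.2 * u H ^ pq.1 * v ^ pq.2) (F H)) :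
    (∀ p, Summable fun q => z p q * v ^ q) ∧
      HasSeriesIn u (mk fun p => ∑' q, z p q * v ^ q) F := by
  have hsum (p) : Summable fun q => z p q * v ^ q := by
    obtain ⟨H, hH, hne⟩ := (h.and (hu self_mem_nhdsWithin)).exists
    refine ((hH.summable.prod_factor p).mul_left (u H ^ p)⁻¹).congr fun q => ?_
    have : u H ^ p ≠ 0 := pow_ne_zero p hne
    field_simp
  refine ⟨hsum, ?_⟩
  filter_upwards [h] with H hH
  refine hH.prod_fiberwise fun p => ?_
  rw [coeff_mk, mul_comm]
  exact ((hsum p).hasSum.mul_left (u H ^ p)).congr_fun fun q => by ring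

end HasSeriesIn

end HasSeriesIn

/-- `u` is a holomorphic coordinate at `0` on the open set `U`, with no other zero in `U`. -/
structure IsCoordinateOn (u : ℂ → ℂ) (U : Set ℂ) : Prop where
  isOpen : IsOpen U
  zero_mem : 0 ∈ U
  differentiableOn : DifferentiableOn ℂ u U
  map_zero : u 0 = 0
  deriv_ne_zero : deriv u 0 ≠ 0
  ne_zero : ∀ H ∈ U, H ≠ 0 → u H ≠ 0

namespace IsCoordinateOn

variable {u Φ : ℂ → ℂ} {U : Set ℂ} {r : ℝ}

theorem mem_nhds_zero (hu : IsCoordinateOn u U) : U ∈ 𝓝 0 :=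
  hu.isOpen.mem_nhds hu.zero_mem

theorem tendsto (hu : IsCoordinateOn u U) : Tendsto u (𝓝[≠] 0) (𝓝[≠] 0) := by
  refine tendsto_nhdsWithin_iff.2 ⟨?_, ?_⟩
  · have := (hu.differentiableOn.differentiableAt hu.mem_nhds_zero).continuousAt.tendsto
    rw [hu.map_zero] at this
    exact this.mono_left nhdsWithin_le_nhds
  · filter_upwards [self_mem_nhdsWithin, mem_nhdsWithin_of_mem_nhds hu.mem_nhds_zero]
      with H h0 hH using hu.ne_zero H hH h0

theorem exists_factor (hu : IsCoordinateOn u U) :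
    ∃ D : ℂ → ℂ, DifferentiableOn ℂ D U ∧ (∀ H, u H = H * D H) ∧ (∀ H ∈ U, D H ≠ 0) ∧
      D 0 = deriv u 0 := by
  have hfac (H) : u H = H * dslope u 0 H := by
    simpa [hu.map_zero] using (sub_smul_dslope u 0 H).symm
  refine ⟨dslope u 0, (Complex.differentiableOn_dslope hu.mem_nhds_zero).2 hu.differentiableOn,
    hfac, fun H hH => ?_, dslope_same u 0⟩
  rcases eq_or_ne H 0 with rfl | h0
  · simpa using hu.deriv_ne_zero
  · exact right_ne_zero_of_mul (hfac H ▸ hu.ne_zero H hH h0)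

theorem exists_eq_mul (hu : IsCoordinateOn u U) (hΦ : DifferentiableOn ℂ Φ U) (h0 : Φ 0 = 0) :
    ∃ Q : ℂ → ℂ, DifferentiableOn ℂ Q U ∧ ∀ H ∈ U, Φ H = u H * Q H := by
  obtain ⟨D, hD, huD, hD0, -⟩ := hu.exists_factor
  refine ⟨fun H => dslope Φ 0 H / D H,
    ((Complex.differentiableOn_dslope hu.mem_nhds_zero).2 hΦ).div hD hD0, fun H hH => ?_⟩
  have hfac : Φ H = H * dslope Φ 0 H := by simpa [h0] using (sub_smul_dslope Φ 0 H).symm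
  rw [hfac, huD]
  field_simp [hD0 H hH]

theorem ne_zero_of_mem_sphere (hu : IsCoordinateOn u U) (hr : 0 < r)
    (hU : Metric.closedBall 0 r ⊆ U) {H : ℂ} (hH : H ∈ Metric.sphere 0 r) : u H ≠ 0 :=
  hu.ne_zero H (hU (Metric.sphere_subset_closedBall hH)) (Metric.ne_of_mem_sphere hH hr.ne')

theorem circleIntegrable (hu : IsCoordinateOn u U) (hr : 0 < r)
    (hU : Metric.closedBall 0 r ⊆ U) (hΦ : DifferentiableOn ℂ Φ U) (n : ℕ) :
    CircleIntegrable (fun H => Φ H * deriv u H / u H ^ n) 0 r := by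
  refine ContinuousOn.circleIntegrable hr.le (ContinuousOn.div ?_ ?_ fun H hH =>
    pow_ne_zero n (hu.ne_zero_of_mem_sphere hr hU hH))
  all_goals refine ContinuousOn.mono ?_ (Metric.sphere_subset_closedBall.trans hU)
  · exact (hΦ.mul (hu.differentiableOn.deriv hu.isOpen)).continuousOn
  · exact hu.differentiableOn.continuousOn.pow n

theorem circleIntegral_deriv_div (hu : IsCoordinateOn u U) (hr : 0 < r)
    (hU : Metric.closedBall 0 r ⊆ U) (hΦ : DifferentiableOn ℂ Φ U) :
    ∮ H in C(0, r), Φ H * deriv u H / u H = 2 * Real.pi * Complex.I * Φ 0 := by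
  obtain ⟨D, hD, huD, hD0, hDu⟩ := hu.exists_factor
  have hd : DifferentiableOn ℂ (fun H => Φ H * deriv u H / D H) (Metric.closedBall 0 r) :=
    ((hΦ.mul (hu.differentiableOn.deriv hu.isOpen)).div hD hD0).mono hU
  have hCauchy := hd.circleIntegral_sub_inv_smul (Metric.mem_ball_self hr)
  rw [hDu, mul_div_cancel_right₀ _ hu.deriv_ne_zero, smul_eq_mul] at hCauchy
  rw [← hCauchy]
  refine circleIntegral.integral_congr hr.le fun H _ => ?_
  simp only [huD H, sub_zero, smul_eq_mul]
  ring

theorem circleIntegral_deriv_div_pow (hu : IsCoordinateOn u U) (hr : 0 < r)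
    (hU : Metric.closedBall 0 r ⊆ U) (n : ℕ) :
    ∮ H in C(0, r), deriv u H / u H ^ (n + 2) = 0 := by
  refine circleIntegral.integral_eq_zero_of_hasDerivWithinAt
    (f := fun H => -(u H ^ (n + 1))⁻¹ / (n + 1)) hr.le fun H hH => ?_
  have hne := hu.ne_zero_of_mem_sphere hr hU hH
  have hd := (hu.differentiableOn.differentiableAt (hu.isOpen.mem_nhds
    (hU (Metric.sphere_subset_closedBall hH)))).hasDerivAt
  convert! ((((hd.pow (n + 1)).inv (pow_ne_zero _ hne)).neg).div_const
    ((n : ℂ) + 1)).hasDerivWithinAt using 1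
  have hn : (n : ℂ) + 1 ≠ 0 := by exact_mod_cast n.succ_ne_zero
  simp only [Nat.cast_add, Nat.cast_one, Nat.add_sub_cancel, Pi.pow_apply]
  field_simp
  ring

end IsCoordinateOn

/-- Lagrange inversion. -/
theorem HasSeriesIn.circleIntegral_eq_coeff {u Φ : ℂ → ℂ} {U : Set ℂ} {r : ℝ} {f : ℂ⟦X⟧}
    (hf : HasSeriesIn u f Φ) (hu : IsCoordinateOn u U) (hr : 0 < r)
    (hU : Metric.closedBall 0 r ⊆ U) (hΦ : DifferentiableOn ℂ Φ U) (n : ℕ) :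
    ∮ H in C(0, r), Φ H * deriv u H / u H ^ (n + 1) = 2 * Real.pi * Complex.I * coeff n f := by
  have hΦ0 {f : ℂ⟦X⟧} {Φ : ℂ → ℂ} (hf : HasSeriesIn u f Φ) (hΦ : DifferentiableOn ℂ Φ U) :
      Φ 0 = coeff 0 f :=
    tendsto_nhds_unique ((hΦ.differentiableAt hu.mem_nhds_zero).continuousAt.tendsto.mono_left
      nhdsWithin_le_nhds) (hf.tendsto hu.tendsto)
  induction n generalizing f Φ with
  | zero => simpa [hΦ0 hf hΦ] using hu.circleIntegral_deriv_div hr hU hΦ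
  | succ n ih =>
    obtain ⟨Q, hQ, hΦQ⟩ := hu.exists_eq_mul (hΦ.sub_const (coeff 0 f))
      (sub_eq_zero.2 (hΦ0 hf hΦ))
    have hQs : HasSeriesIn u (mk fun n => coeff (n + 1) f) Q := by
      refine (hf.shift hu.tendsto).congr ?_
      filter_upwards [mem_nhdsWithin_of_mem_nhds hu.mem_nhds_zero, hu.tendsto self_mem_nhdsWithin]
        with H hH h0
      rw [hΦQ H hH, mul_div_cancel_left₀ _ h0]
    have hsplit : ∮ H in C(0, r), Φ H * deriv u H / u H ^ (n + 2)
        = ∮ H in C(0, r), (coeff 0 f * deriv u H / u H ^ (n + 2)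
            + Q H * deriv u H / u H ^ (n + 1)) := by
      refine circleIntegral.integral_congr hr.le fun H hH => ?_
      have hne := hu.ne_zero_of_mem_sphere hr hU hH
      have hfac : Φ H = coeff 0 f + u H * Q H := by
        rw [← hΦQ H (hU (Metric.sphere_subset_closedBall hH)), add_sub_cancel]
      simp only [hfac]
      field_simp
      ring
    rw [hsplit, circleIntegral.integral_add
      (hu.circleIntegrable hr hU (differentiableOn_const _) _)
      (hu.circleIntegrable hr hU hQ _), ih hQs hQ, coeff_mk]
    simp only [mul_div_assoc]
    rw [circleIntegral.integral_const_mul, hu.circleIntegral_deriv_div_pow hr hU, mul_zero,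
      zero_add]

/-! ### The binomial series -/

theorem multichoose_eq_prod_div_factorial {K : Type*} [Field K] [CharZero K] (s : K) (n : ℕ) :
    Ring.multichoose s n = (∏ j ∈ Finset.range n, (s + j)) / n.factorial := by
  have hprod : (ascPochhammer K n).eval s = ∏ j ∈ Finset.range n, (s + j) := by
    induction n with
    | zero => simp
    | succ n ih => rw [ascPochhammer_succ_eval, ih, Finset.prod_range_succ]
  have hfac := Ring.factorial_nsmul_multichoose_eq_ascPochhammer s n
  rw [Polynomial.ascPochhammer_smeval_eq_eval, hprod, nsmul_eq_mul] at hfac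
  rw [eq_div_iff (by exact_mod_cast n.factorial_ne_zero), ← hfac, mul_comm]

/-- Euler's limit formula for the Gamma function, read as the asymptotics of the coefficients of
`(1 - x) ^ (-s)`. -/
theorem tendsto_multichoose_mul_cpow (s : ℂ) :
    Tendsto (fun n : ℕ => Ring.multichoose s n * (n : ℂ) ^ (1 - s)) atTop
      (𝓝 (Complex.Gamma s)⁻¹) := by
  by_cases hs : ∃ m : ℕ, s = -m
  · obtain ⟨m, rfl⟩ := hs
    rw [Complex.Gamma_neg_nat_eq_zero, inv_zero]
    refine tendsto_const_nhds.congr' ?_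
    filter_upwards [eventually_gt_atTop m] with n hn
    rw [multichoose_eq_prod_div_factorial,
      Finset.prod_eq_zero (Finset.mem_range.2 hn) (neg_add_cancel _), zero_div, zero_mul]
  · push Not at hs
    have hEuler := ((Complex.GammaSeq_tendsto_Gamma s).inv₀ (Complex.Gamma_ne_zero hs)).mul
      (tendsto_natCast_div_add_atTop s)
    rw [mul_one] at hEuler
    refine hEuler.congr' ?_
    filter_upwards [eventually_gt_atTop 0] with n hn
    have hn0 : (n : ℂ) ≠ 0 := by exact_mod_cast hn.ne'
    have hne : s + n ≠ 0 := fun h => hs n (eq_neg_of_add_eq_zero_left h)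
    have hpow : (n : ℂ) ^ s ≠ 0 := by simp [Complex.cpow_eq_zero_iff, hn0]
    have hfac : (n.factorial : ℂ) ≠ 0 := by exact_mod_cast n.factorial_ne_zero
    rw [multichoose_eq_prod_div_factorial, Complex.GammaSeq, Finset.prod_range_succ,
      Complex.cpow_sub _ _ hn0, Complex.cpow_one, add_comm (n : ℂ) s]
    field_simp

theorem isBigO_natCast_rpow {a b : ℝ} (h : a ≤ b) :
    (fun n : ℕ => (n : ℝ) ^ a) =O[atTop] fun n : ℕ => (n : ℝ) ^ b := by
  refine IsBigO.of_bound 1 ?_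
  filter_upwards [eventually_ge_atTop 1] with n hn
  have hn1 : (1 : ℝ) ≤ n := by exact_mod_cast hn
  rw [one_mul, Real.norm_of_nonneg (by positivity), Real.norm_of_nonneg (by positivity)]
  exact Real.rpow_le_rpow_of_exponent_le hn1 h

theorem isBigO_multichoose (s : ℂ) :
    (Ring.multichoose s) =O[atTop] fun n : ℕ => (n : ℝ) ^ (s.re - 1) := by
  obtain ⟨B, hB⟩ := ((tendsto_multichoose_mul_cpow s).isBigO_one ℝ).bound
  refine IsBigO.of_bound B ?_
  filter_upwards [hB, eventually_gt_atTop 0] with n hn hn0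
  have hpos : (0 : ℝ) < n := by exact_mod_cast hn0
  rw [norm_mul, Complex.norm_natCast_cpow_of_pos hn0, norm_one, mul_one, Complex.sub_re,
    Complex.one_re] at hn
  rw [Real.norm_of_nonneg (by positivity), ← neg_sub 1 s.re, Real.rpow_neg hpos.le]
  rwa [← div_eq_mul_inv, le_div_iff₀ (by positivity)]

theorem hasSeriesIn_one_sub_div_cpow {u : ℂ → ℂ} (hu : Tendsto u (𝓝[≠] 0) (𝓝 0)) (s c : ℂ) :
    HasSeriesIn u (mk fun n => Ring.multichoose s n * (c ^ n)⁻¹)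
      fun H => (1 - u H / c) ^ (-s) := by
  have hsmall : ∀ᶠ H in 𝓝[≠] 0, ‖u H / c‖ < 1 :=
    ((hu.div_const c).norm).eventually_lt tendsto_const_nhds (by simp)
  filter_upwards [hsmall] with H hH
  have hbinom := (Complex.one_div_one_sub_cpow_hasFPowerSeriesOnBall_zero s).hasSum
    (y := u H / c) (by rwa [← ENNReal.ofReal_one, Metric.eball_ofReal, mem_ball_zero_iff])
  rw [zero_add, one_div, ← Complex.cpow_neg] at hbinom
  refine hbinom.congr_fun fun n => ?_
  rw [FormalMultilinearSeries.ofScalars_apply_eq, ← Ring.multichoose_eq, coeff_mk, smul_eq_mul,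
    div_pow]
  ring

/-! ### Transfer at the critical point -/

/-- The factor of `û` that does not vanish on the closed unit disc. -/
def cubicFactor (H : ℂ) : ℂ := 10 - 12 * H + 6 * H ^ 2 - H ^ 3

theorem uhat_eq (H : ℂ) : uhat H = (uc : ℂ) / 3 * H * cubicFactor H := rfl

theorem tc_pos : 0 < tc := by unfold tc; positivity

theorem uc_pos : 0 < uc := by
  have := tc_pos
  unfold uc; positivity

theorem uc_ne_zero : (uc : ℂ) ≠ 0 := by exact_mod_cast uc_pos.ne'

theorem cubicFactor_re (H : ℂ) :
    (cubicFactor H).re =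
      10 - 12 * H.re + 6 * (H.re ^ 2 - H.im ^ 2) - (H.re ^ 3 - 3 * H.re * H.im ^ 2) := by
  simp only [cubicFactor, pow_succ, pow_zero, one_mul, Complex.sub_re, Complex.add_re,
    Complex.re_ofNat, Complex.mul_re, Complex.im_ofNat, zero_mul, sub_zero, Complex.mul_im]
  ring

theorem cubicFactor_im (H : ℂ) :
    (cubicFactor H).im = H.im * (-12 + 12 * H.re - (3 * H.re ^ 2 - H.im ^ 2)) := by
  simp only [cubicFactor, pow_succ, pow_zero, one_mul, Complex.sub_im, Complex.add_im,
    Complex.im_ofNat, Complex.mul_im, Complex.re_ofNat, zero_mul, add_zero, zero_sub,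
    Complex.mul_re]
  ring

theorem differentiable_cubicFactor : Differentiable ℂ cubicFactor := by
  unfold cubicFactor; fun_prop

theorem differentiable_uhat : Differentiable ℂ uhat := by unfold uhat; fun_prop

theorem deriv_uhat (H : ℂ) : deriv uhat H = (uc : ℂ) / 3 * ((1 - H) ^ 2 * (10 - 4 * H)) := by
  have hexpand : uhat = fun H => (uc : ℂ) / 3 * (10 * H - 12 * H ^ 2 + 6 * H ^ 3 - H ^ 4) := by
    funext H
    rw [uhat]
    ring
  have hderiv := (((((hasDerivAt_id H).const_mul (10 : ℂ)).sub
    (((hasDerivAt_id H).pow 2).const_mul 12)).add (((hasDerivAt_id H).pow 3).const_mul 6)).sub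
    ((hasDerivAt_id H).pow 4)).const_mul ((uc : ℂ) / 3)
  rw [hexpand]
  refine hderiv.deriv.trans ?_
  simp only [id_eq, Nat.cast_ofNat, mul_one]
  ring

theorem one_sub_uhat_div (H : ℂ) : 1 - uhat H / uc = (1 - H) ^ 3 * ((3 - H) / 3) := by
  have := uc_ne_zero
  rw [uhat]
  field_simp
  ring

/-- A neighbourhood of the closed unit disc on which `û` vanishes only at `0` and `1 - û / u_c`
vanishes only at `1`; all holomorphic functions of the parameter `H` live there. -/
def uhatDomain : Set ℂ := {H | cubicFactor H ≠ 0 ∧ H.re < 3}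

theorem isOpen_uhatDomain : IsOpen uhatDomain :=
  (isOpen_ne.preimage differentiable_cubicFactor.continuous).inter
    (isOpen_Iio.preimage Complex.continuous_re)

theorem sq_norm_eq_re_sq_add_im_sq (z : ℂ) : ‖z‖ ^ 2 = z.re ^ 2 + z.im ^ 2 := by
  linarith [Complex.sq_norm_sub_sq_re z]

theorem closedBall_subset_uhatDomain : Metric.closedBall 0 1 ⊆ uhatDomain := by
  intro H hH
  have hnorm : H.re ^ 2 + H.im ^ 2 ≤ 1 := by
    rw [← sq_norm_eq_re_sq_add_im_sq H]
    nlinarith [norm_nonneg H, mem_closedBall_zero_iff.1 hH]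
  have hre : H.re ≤ 1 := by nlinarith [sq_nonneg H.im]
  refine ⟨fun h0 => ?_, by linarith⟩
  have hre_eq : (cubicFactor H).re = 2 + (2 - H.re) * ((2 - H.re) ^ 2 - 3 * H.im ^ 2) := by
    rw [cubicFactor_re]
    ring
  rw [h0, Complex.zero_re] at hre_eq
  have hpos : 0 ≤ 2 - H.re := by linarith
  nlinarith [mul_nonneg hpos (sq_nonneg (1 - 2 * H.re)),
    mul_nonneg hpos (sub_nonneg.2 hnorm)]

theorem uhatDomain_mem_nhds_one : uhatDomain ∈ 𝓝 1 :=
  isOpen_uhatDomain.mem_nhds (closedBall_subset_uhatDomain (by simp))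

theorem isCoordinateOn_uhat : IsCoordinateOn uhat uhatDomain where
  isOpen := isOpen_uhatDomain
  zero_mem := closedBall_subset_uhatDomain (by simp)
  differentiableOn := differentiable_uhat.differentiableOn
  map_zero := by simp [uhat]
  deriv_ne_zero := by simp [deriv_uhat, uc_pos.ne']
  ne_zero H hH h0 := by
    rw [uhat_eq]
    exact mul_ne_zero (mul_ne_zero (div_ne_zero uc_ne_zero (by norm_num)) h0) hH.1

theorem uc_mul_le_norm_uhat {H : ℂ} (hH : ‖H‖ = 1) : uc * (1 + ‖1 - H‖ ^ 4 / 6) ≤ ‖uhat H‖ := by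
  have hcircle : H.im ^ 2 = 1 - H.re ^ 2 := by
    have := sq_norm_eq_re_sq_add_im_sq H
    rw [hH] at this
    linarith
  set s := ‖1 - H‖ ^ 2 with hs_def
  have hs : s = 2 - 2 * H.re := by
    rw [hs_def, sq_norm_eq_re_sq_add_im_sq]
    simp only [Complex.sub_re, Complex.one_re, Complex.sub_im, Complex.one_im]
    linarith
  have hcubic : ‖cubicFactor H‖ ^ 2 = 9 + 12 * s ^ 2 + 10 * s ^ 3 := by
    rw [sq_norm_eq_re_sq_add_im_sq, cubicFactor_re, cubicFactor_im, mul_pow, hcircle, hs]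
    ring
  have hs0 : 0 ≤ s := by positivity
  have hs4 : s ≤ 4 := by nlinarith [sq_nonneg H.im]
  have hle : 3 * (1 + s ^ 2 / 6) ≤ ‖cubicFactor H‖ := by
    refine le_of_sq_le_sq ?_ (norm_nonneg _)
    rw [hcubic]
    nlinarith [mul_nonneg (sq_nonneg s) (by nlinarith : (0 : ℝ) ≤ 16 - s ^ 2), pow_nonneg hs0 3]
  have huc := uc_pos
  have hpow : ‖1 - H‖ ^ 4 = s ^ 2 := by rw [hs_def]; ring
  rw [uhat_eq, norm_mul, norm_mul, norm_div, hH, Complex.norm_real, Real.norm_of_nonneg huc.le,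
    Complex.norm_ofNat, mul_one, hpow]
  calc uc * (1 + s ^ 2 / 6) = uc / 3 * (3 * (1 + s ^ 2 / 6)) := by ring
    _ ≤ uc / 3 * ‖cubicFactor H‖ := by gcongr

theorem mul_pow_le_pow_mul_one_add_pow {y : ℝ} (hy : 0 ≤ y) {j n : ℕ} (hj : 0 < j) (hjn : j ≤ n) :
    (n * y) ^ j ≤ j ^ j * (1 + y) ^ n := by
  have hj0 : (0 : ℝ) < j := by exact_mod_cast hj
  have hone : (1 : ℝ) ≤ n / j := by
    rw [one_le_div hj0]
    exact_mod_cast hjn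
  have hBernoulli : 1 + n / j * y ≤ (1 + y) ^ ((n : ℝ) / j) :=
    one_add_mul_self_le_rpow_one_add (by linarith) hone
  calc (n * y) ^ j = j ^ j * (n / j * y) ^ j := by rw [← mul_pow]; congr 1; field_simp
    _ ≤ j ^ j * ((1 + y) ^ ((n : ℝ) / j)) ^ j := by gcongr; linarith
    _ = j ^ j * (1 + y) ^ n := by
      rw [← Real.rpow_natCast ((1 + y) ^ ((n : ℝ) / j)), ← Real.rpow_mul (by positivity),
        div_mul_cancel₀ _ hj0.ne', Real.rpow_natCast]

/-- On the unit circle `|û| ≥ u_c (1 + y)` with `6 y = |1 - H| ^ 4`, and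
`y ^ (j + 1) (1 + y) ^ (-n) = O(n ^ (-(j + 1)))`. -/
theorem norm_integrand_le {S : ℂ → ℂ} {M : ℝ} {j n : ℕ} (hjn : j < n) {H : ℂ} (hH : ‖H‖ = 1)
    (hM : ‖S H * (10 - 4 * H) / 3‖ ≤ M) :
    ‖(1 - H) ^ (4 * j + 2) * S H * deriv uhat H / uhat H ^ (n + 1)‖
      ≤ M * 6 ^ (j + 1) * (j + 1) ^ (j + 1) / (n ^ (j + 1) * uc ^ n) := by
  have huc := uc_pos
  have hn0 : (0 : ℝ) < n := by exact_mod_cast j.zero_le.trans_lt hjn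
  have hM0 : 0 ≤ M := (norm_nonneg _).trans hM
  set y : ℝ := ‖1 - H‖ ^ 4 / 6 with hy
  have hy0 : 0 ≤ y := by positivity
  have hden : (uc * (1 + y)) ^ (n + 1) ≤ ‖uhat H ^ (n + 1)‖ := by
    rw [norm_pow]
    gcongr
    exact uc_mul_le_norm_uhat hH
  have hnum : ‖(1 - H) ^ (4 * j + 2) * S H * deriv uhat H‖ ≤ uc * (6 * y) ^ (j + 1) * M := by
    have hsplit : (1 - H) ^ (4 * j + 2) * S H * deriv uhat H
        = uc * ((1 - H) ^ 4) ^ (j + 1) * (S H * (10 - 4 * H) / 3) := by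
      rw [deriv_uhat, ← pow_mul]; ring
    rw [hsplit, norm_mul, norm_mul, norm_pow, norm_pow, Complex.norm_real,
      Real.norm_of_nonneg huc.le, hy, mul_div_cancel₀ _ (by norm_num)]
    gcongr
  have hweight : (n * y) ^ (j + 1) ≤ (j + 1) ^ (j + 1) * (1 + y) ^ (n + 1) := by
    refine (mul_pow_le_pow_mul_one_add_pow hy0 j.succ_pos hjn).trans ?_
    push_cast
    gcongr
    · linarith
    · exact n.le_succ
  rw [norm_div, div_le_div_iff₀ (lt_of_lt_of_le (by positivity) hden) (by positivity)]
  calc ‖(1 - H) ^ (4 * j + 2) * S H * deriv uhat H‖ * (n ^ (j + 1) * uc ^ n)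
      ≤ uc * (6 * y) ^ (j + 1) * M * (n ^ (j + 1) * uc ^ n) := by gcongr
    _ = M * 6 ^ (j + 1) * uc ^ (n + 1) * (n * y) ^ (j + 1) := by
      rw [mul_pow 6, mul_pow (n : ℝ)]; ring
    _ ≤ M * 6 ^ (j + 1) * uc ^ (n + 1) * ((j + 1) ^ (j + 1) * (1 + y) ^ (n + 1)) := by gcongr
    _ = M * 6 ^ (j + 1) * (j + 1) ^ (j + 1) * (uc * (1 + y)) ^ (n + 1) := by
      rw [mul_pow uc]; ring
    _ ≤ M * 6 ^ (j + 1) * (j + 1) ^ (j + 1) * ‖uhat H ^ (n + 1)‖ := by gcongr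

theorem HasSeriesIn.isBigO_coeff_mul_uc_pow {f : ℂ⟦X⟧} {S : ℂ → ℂ} {j : ℕ}
    (hf : HasSeriesIn uhat f fun H => (1 - H) ^ (4 * j + 2) * S H)
    (hS : DifferentiableOn ℂ S uhatDomain) :
    (fun n => coeff n f * uc ^ n) =O[atTop] fun n : ℕ => ((n : ℝ) ^ (j + 1))⁻¹ := by
  obtain ⟨M, hM⟩ := (isCompact_sphere (0 : ℂ) 1).exists_bound_of_continuousOn
    (f := fun H => S H * (10 - 4 * H) / 3) (((hS.continuousOn.mono
      (Metric.sphere_subset_closedBall.trans closedBall_subset_uhatDomain)).mul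
      (by fun_prop)).div_const _)
  refine IsBigO.of_bound (M * 6 ^ (j + 1) * (j + 1) ^ (j + 1)) ?_
  filter_upwards [eventually_gt_atTop j] with n hn
  have hint := circleIntegral.norm_integral_le_of_norm_le_const zero_le_one fun H hH =>
    norm_integrand_le hn (mem_sphere_zero_iff_norm.1 hH) (hM H hH)
  rw [hf.circleIntegral_eq_coeff isCoordinateOn_uhat one_pos closedBall_subset_uhatDomain
    ((Differentiable.differentiableOn (by fun_prop)).mul hS) n, norm_mul, mul_one] at hint
  have hpi : ‖(2 * Real.pi * Complex.I : ℂ)‖ = 2 * Real.pi := by simp [abs_of_pos Real.pi_pos]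
  rw [hpi] at hint
  have hcoeff := le_of_mul_le_mul_left hint (by positivity)
  have huc := pow_pos uc_pos n
  rw [norm_mul, norm_pow, Complex.norm_real, Real.norm_of_nonneg uc_pos.le,
    Real.norm_of_nonneg (by positivity), ← div_eq_mul_inv]
  rwa [← div_div, le_div_iff₀ huc] at hcoeff

/-- The branch of `(1 - û / u_c) ^ (k / 3)` near `0`, continued to `uhatDomain`. -/
noncomputable def cubeRootPower (k : ℕ) (H : ℂ) : ℂ := (1 - H) ^ k * ((3 - H) / 3) ^ ((k : ℂ) / 3)

theorem three_sub_div_mem_slitPlane {H : ℂ} (hH : H ∈ uhatDomain) :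
    (3 - H) / 3 ∈ Complex.slitPlane := by
  have hre : ((3 - H) / 3).re = (3 - H.re) / 3 := by simp
  exact .inl (by rw [hre]; linarith [hH.2])

theorem differentiableOn_three_sub_div_cpow (a : ℂ) :
    DifferentiableOn ℂ (fun H : ℂ => ((3 - H) / 3) ^ a) uhatDomain :=
  DifferentiableOn.cpow (Differentiable.differentiableOn (by fun_prop))
    (differentiableOn_const _) fun _ hH => three_sub_div_mem_slitPlane hH

theorem eventually_log_one_sub_uhat_div :
    ∀ᶠ H in 𝓝 0, Complex.log (1 - uhat H / uc)
      = 3 * Complex.log (1 - H) + Complex.log ((3 - H) / 3) := by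
  set L : ℂ → ℂ := fun H => 3 * Complex.log (1 - H) + Complex.log ((3 - H) / 3) with hL
  have hLc : ContinuousAt L 0 := by
    refine ContinuousAt.add (continuousAt_const.mul (ContinuousAt.clog (by fun_prop) ?_))
      (ContinuousAt.clog (by fun_prop) ?_) <;> simp
  have hsmall : ∀ᶠ H in 𝓝 (0 : ℂ), |(L H).im| < Real.pi :=
    ContinuousAt.eventually_lt (Complex.continuous_im.continuousAt.comp hLc).abs
      continuousAt_const (by simp [hL, Real.pi_pos])
  have h1 : ∀ᶠ H in 𝓝 (0 : ℂ), 1 - H ≠ 0 := ContinuousAt.eventually_ne (by fun_prop) (by simp)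
  have h3 : ∀ᶠ H in 𝓝 (0 : ℂ), (3 - H) / 3 ≠ 0 :=
    ContinuousAt.eventually_ne (by fun_prop) (by simp)
  filter_upwards [hsmall, h1, h3] with H hH h1 h3
  have hexp : Complex.exp (L H) = 1 - uhat H / uc := by
    rw [one_sub_uhat_div, Complex.exp_add, Complex.exp_log h3, ← Nat.cast_ofNat,
      Complex.exp_nat_mul, Complex.exp_log h1]
  rw [← hexp, Complex.log_exp (abs_lt.1 hH).1 (abs_lt.1 hH).2.le]

theorem cubeRootPower_eventuallyEq (k : ℕ) :
    (fun H => (1 - uhat H / uc) ^ ((k : ℂ) / 3)) =ᶠ[𝓝 0] cubeRootPower k := by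
  have h1 : ∀ᶠ H in 𝓝 (0 : ℂ), 1 - H ≠ 0 := ContinuousAt.eventually_ne (by fun_prop) (by simp)
  have h3 : ∀ᶠ H in 𝓝 (0 : ℂ), (3 - H) / 3 ≠ 0 :=
    ContinuousAt.eventually_ne (by fun_prop) (by simp)
  filter_upwards [eventually_log_one_sub_uhat_div, h1, h3] with H hlog h1 h3
  have hne : 1 - uhat H / uc ≠ 0 := by
    rw [one_sub_uhat_div]
    exact mul_ne_zero (pow_ne_zero 3 h1) h3
  have hpow : (1 - H) ^ k = Complex.exp (k * Complex.log (1 - H)) := by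
    rw [Complex.exp_nat_mul, Complex.exp_log h1]
  rw [cubeRootPower, Complex.cpow_def_of_ne_zero hne, Complex.cpow_def_of_ne_zero h3, hlog, hpow,
    ← Complex.exp_add]
  congr 1
  ring

theorem hasSeriesIn_cubeRootPower (k : ℕ) :
    HasSeriesIn uhat (mk fun n => Ring.multichoose (-((k : ℂ) / 3)) n * ((uc : ℂ) ^ n)⁻¹)
      (cubeRootPower k) := by
  have hu := isCoordinateOn_uhat.tendsto.mono_right nhdsWithin_le_nhds
  refine (hasSeriesIn_one_sub_div_cpow hu _ _).congr ?_
  simpa only [neg_neg] using (cubeRootPower_eventuallyEq k).filter_mono nhdsWithin_le_nhds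

theorem exists_eq_cubeRootPower_add (k : ℕ) {q : ℂ → ℂ} (hq : DifferentiableOn ℂ q uhatDomain) :
    ∃ q₁ : ℂ → ℂ, DifferentiableOn ℂ q₁ uhatDomain ∧ ∀ H, (1 - H) ^ k * q H
      = q 1 / (2 / 3) ^ ((k : ℂ) / 3) * cubeRootPower k H + (1 - H) ^ (k + 1) * q₁ H := by
  set c : ℂ := q 1 / (2 / 3) ^ ((k : ℂ) / 3) with hc
  set p : ℂ → ℂ := fun H => q H - c * ((3 - H) / 3) ^ ((k : ℂ) / 3) with hp
  have hpd : DifferentiableOn ℂ p uhatDomain :=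
    hq.sub ((differentiableOn_three_sub_div_cpow _).const_mul c)
  have hp1 : p 1 = 0 := by
    have hne : (2 / 3 : ℂ) ^ ((k : ℂ) / 3) ≠ 0 := by simp [Complex.cpow_eq_zero_iff]
    have hval : ((3 : ℂ) - 1) / 3 = 2 / 3 := by norm_num
    simp only [hp, hc, hval, div_mul_cancel₀ _ hne, sub_self]
  have hfac (H) : p H = (H - 1) * dslope p 1 H := by
    simpa [hp1] using (sub_smul_dslope p 1 H).symm
  refine ⟨fun H => -dslope p 1 H,
    ((Complex.differentiableOn_dslope uhatDomain_mem_nhds_one).2 hpd).neg, fun H => ?_⟩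
  have hqH : q H = (H - 1) * dslope p 1 H + c * ((3 - H) / 3) ^ ((k : ℂ) / 3) := by
    rw [← hfac]
    simp only [hp, sub_add_cancel]
  rw [hqH, cubeRootPower]
  ring

namespace HasSeriesIn

variable {f : ℂ⟦X⟧} {q : ℂ → ℂ} {k : ℕ}

theorem exists_eq_cubeRootPower_add (hf : HasSeriesIn uhat f fun H => (1 - H) ^ k * q H)
    (hq : DifferentiableOn ℂ q uhatDomain) :
    ∃ (g : ℂ⟦X⟧) (q₁ : ℂ → ℂ), DifferentiableOn ℂ q₁ uhatDomain ∧
      HasSeriesIn uhat g (fun H => (1 - H) ^ (k + 1) * q₁ H) ∧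
      ∀ n, coeff n f * uc ^ n = q 1 / (2 / 3) ^ ((k : ℂ) / 3)
        * Ring.multichoose (-((k : ℂ) / 3)) n + coeff n g * uc ^ n := by
  obtain ⟨q₁, hq₁, hsplit⟩ := _root_.exists_eq_cubeRootPower_add k hq
  refine ⟨_, q₁, hq₁, (hf.sub ((hasSeriesIn_cubeRootPower k).const_smul
    (q 1 / (2 / 3) ^ ((k : ℂ) / 3)))).congr (.of_forall fun H => ?_), fun n => ?_⟩
  · simp only [hsplit H, smul_eq_mul, add_sub_cancel_left]
  · have := pow_ne_zero n uc_ne_zero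
    rw [map_sub, coeff_smul, coeff_mk, smul_eq_mul]
    field_simp
    ring

theorem isBigO_coeff_mul_uc_pow_rpow (hf : HasSeriesIn uhat f fun H => (1 - H) ^ k * q H)
    (hq : DifferentiableOn ℂ q uhatDomain) :
    (fun n => coeff n f * uc ^ n) =O[atTop] fun n : ℕ => (n : ℝ) ^ (-(k / 3 + 1) : ℝ) := by
  suffices h : ∀ i d : ℕ, d + i = 3 * k + 2 → ∀ {f : ℂ⟦X⟧} {q : ℂ → ℂ},
      HasSeriesIn uhat f (fun H => (1 - H) ^ (k + d) * q H) → DifferentiableOn ℂ q uhatDomain →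
      (fun n => coeff n f * uc ^ n) =O[atTop] fun n : ℕ => (n : ℝ) ^ (-(k / 3 + 1) : ℝ) from
    h (3 * k + 2) 0 (zero_add _) hf hq
  intro i
  induction i with
  | zero =>
    rintro d rfl f q hf hq
    rw [show k + (3 * k + 2) = 4 * k + 2 by ring] at hf
    refine (hf.isBigO_coeff_mul_uc_pow hq).trans ((isBigO_natCast_rpow
      (a := -((k + 1 : ℕ) : ℝ)) ?_).congr_left fun n => ?_)
    · push_cast
      linarith [(k.cast_nonneg : (0 : ℝ) ≤ k)]
    · rw [Real.rpow_neg n.cast_nonneg, Real.rpow_natCast]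
  | succ i ih =>
    intro d hd f q hf hq
    obtain ⟨g, q₁, hq₁, hg, hcoeff⟩ := hf.exists_eq_cubeRootPower_add hq
    simp only [hcoeff]
    refine IsBigO.add (((isBigO_multichoose _).const_mul_left _).trans (isBigO_natCast_rpow ?_))
      (ih (d + 1) (by lia) hg hq₁)
    have hre : (-(((k + d : ℕ) : ℂ) / 3)).re = -((k + d : ℕ) / 3 : ℝ) := by
      simp
    rw [hre]
    push_cast
    have : (0 : ℝ) ≤ d := d.cast_nonneg
    linarith

theorem tendsto_coeff_mul_uc_pow_mul_cpow (hf : HasSeriesIn uhat f fun H => (1 - H) ^ k * q H)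
    (hq : DifferentiableOn ℂ q uhatDomain) :
    Tendsto (fun n : ℕ => coeff n f * uc ^ n * (n : ℂ) ^ ((k : ℂ) / 3 + 1)) atTop
      (𝓝 (q 1 / (2 / 3) ^ ((k : ℂ) / 3) * (Complex.Gamma (-((k : ℂ) / 3)))⁻¹)) := by
  obtain ⟨g, q₁, hq₁, hg, hcoeff⟩ := hf.exists_eq_cubeRootPower_add hq
  have hmain := (tendsto_multichoose_mul_cpow (-((k : ℂ) / 3))).const_mul
    (q 1 / (2 / 3) ^ ((k : ℂ) / 3))
  have hrem : Tendsto (fun n : ℕ => coeff n g * uc ^ n * (n : ℂ) ^ ((k : ℂ) / 3 + 1)) atTop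
      (𝓝 0) := by
    have hweight : (fun n : ℕ => (n : ℂ) ^ ((k : ℂ) / 3 + 1))
        =O[atTop] fun n : ℕ => (n : ℝ) ^ (k / 3 + 1 : ℝ) := by
      refine IsBigO.of_bound 1 ?_
      filter_upwards [eventually_gt_atTop 0] with n hn
      rw [Complex.norm_natCast_cpow_of_pos hn, one_mul, Real.norm_of_nonneg (by positivity)]
      simp
    have hdecay : Tendsto (fun n : ℕ => (n : ℝ) ^ (-(1 / 3) : ℝ)) atTop (𝓝 0) :=
      (tendsto_rpow_neg_atTop (by norm_num)).comp tendsto_natCast_atTop_atTop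
    refine ((hg.isBigO_coeff_mul_uc_pow_rpow hq₁).mul hweight).trans_tendsto
      (hdecay.congr' ?_)
    filter_upwards [eventually_gt_atTop 0] with n hn
    rw [← Real.rpow_add (by exact_mod_cast hn)]
    congr 1
    push_cast
    ring
  have hsum := hmain.add hrem
  rw [add_zero] at hsum
  refine hsum.congr fun n => ?_
  rw [hcoeff n, sub_neg_eq_add, add_comm 1]
  ring

end HasSeriesIn

/-! ### Expansions at the critical point -/

/-- `y` continues to `uhatDomain`, with an expansion `φ + l (1 - û / u_c) + ψ (1 - H) ^ 4 + ⋯` at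
`H = 1`. The constant `φ` and the singular coefficient `ψ` of a product obey the Leibniz rule, so
they are recorded together as the dual number `d = φ + ψ ε`. -/
def HasCriticalExpansion (y : ℂ → ℂ) (d : ℂ[ε]) : Prop :=
  ∃ (l : ℂ) (S : ℂ → ℂ), DifferentiableOn ℂ S uhatDomain ∧ y =ᶠ[𝓝[≠] 0] fun H =>
    d.fst + l * (1 - uhat H / uc) + d.snd * (1 - H) ^ 4 + (1 - H) ^ 5 * S H

theorem hasCriticalExpansion_const (c : ℂ) :
    HasCriticalExpansion (fun _ => c) (TrivSqZeroExt.inl c) :=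
  ⟨0, 0, differentiableOn_const _, .of_forall fun H => by simp⟩

theorem hasCriticalExpansion_uhat : HasCriticalExpansion uhat (TrivSqZeroExt.inl (uc : ℂ)) := by
  refine ⟨-uc, 0, differentiableOn_const _, .of_forall fun H => ?_⟩
  have := uc_ne_zero
  simp only [TrivSqZeroExt.fst_inl, TrivSqZeroExt.snd_inl, Pi.zero_apply]
  field_simp
  ring

theorem Z1hat_one : Z1hat 1 = 3 * ((Real.sqrt 7 : ℂ) - 2) / (10 * uc) := by
  rw [Z1hat]
  ring

theorem hasCriticalExpansion_Z0hat : HasCriticalExpansion Z0hat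
    (TrivSqZeroExt.inl (Z0hat 1) + (3 / 20 : ℂ) • ε) := by
  refine ⟨-(3 / 20) * (1 + 2 * Real.sqrt 7), fun H => 3 / 10 + (1 - H) / 10,
    Differentiable.differentiableOn (by fun_prop), .of_forall fun H => ?_⟩
  simp only [one_sub_uhat_div, Z0hat, TrivSqZeroExt.fst_add, TrivSqZeroExt.snd_add,
    TrivSqZeroExt.fst_inl, TrivSqZeroExt.snd_inl, TrivSqZeroExt.fst_smul, TrivSqZeroExt.snd_smul,
    DualNumber.fst_eps, DualNumber.snd_eps, smul_eq_mul]
  ring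

theorem hasCriticalExpansion_Z1hat : HasCriticalExpansion Z1hat
    (TrivSqZeroExt.inl (Z1hat 1) + (1 / (20 * uc) : ℂ) • ε) := by
  refine ⟨-3 / (20 * uc), fun H => 3 / (10 * uc) * ((3 + (1 - H)) / (3 * cubicFactor H)),
    DifferentiableOn.const_mul (.div (Differentiable.differentiableOn (by fun_prop))
      (differentiable_cubicFactor.const_mul 3).differentiableOn
      fun H hH => mul_ne_zero three_ne_zero hH.1) _, ?_⟩
  filter_upwards [nhdsWithin_le_nhds isCoordinateOn_uhat.mem_nhds_zero] with H hH
  have := uc_ne_zero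
  have hne := hH.1
  have hc : 10 - 12 * H + 6 * H ^ 2 - H ^ 3 = cubicFactor H := rfl
  rw [Z1hat_one]
  simp only [one_sub_uhat_div, Z1hat, hc, TrivSqZeroExt.fst_add, TrivSqZeroExt.snd_add,
    TrivSqZeroExt.fst_inl, TrivSqZeroExt.snd_inl, TrivSqZeroExt.fst_smul, TrivSqZeroExt.snd_smul,
    DualNumber.fst_eps, DualNumber.snd_eps, smul_eq_mul]
  field_simp
  rw [← hc]
  ring

namespace HasCriticalExpansion

variable {y y₁ y₂ : ℂ → ℂ} {d d₁ d₂ : ℂ[ε]}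

theorem congr (h : HasCriticalExpansion y₁ d) (he : y₁ =ᶠ[𝓝[≠] 0] y₂) :
    HasCriticalExpansion y₂ d := by
  obtain ⟨l, S, hS, hy⟩ := h
  exact ⟨l, S, hS, he.symm.trans hy⟩

theorem add (h₁ : HasCriticalExpansion y₁ d₁) (h₂ : HasCriticalExpansion y₂ d₂) :
    HasCriticalExpansion (fun H => y₁ H + y₂ H) (d₁ + d₂) := by
  obtain ⟨l₁, S₁, hS₁, hy₁⟩ := h₁
  obtain ⟨l₂, S₂, hS₂, hy₂⟩ := h₂
  refine ⟨l₁ + l₂, fun H => S₁ H + S₂ H, hS₁.add hS₂, ?_⟩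
  filter_upwards [hy₁, hy₂] with H h₁ h₂
  rw [h₁, h₂, TrivSqZeroExt.fst_add, TrivSqZeroExt.snd_add]
  ring

theorem mul (h₁ : HasCriticalExpansion y₁ d₁) (h₂ : HasCriticalExpansion y₂ d₂) :
    HasCriticalExpansion (fun H => y₁ H * y₂ H) (d₁ * d₂) := by
  obtain ⟨l₁, S₁, hS₁, hy₁⟩ := h₁
  obtain ⟨l₂, S₂, hS₂, hy₂⟩ := h₂
  refine ⟨d₁.fst * l₂ + l₁ * d₂.fst, fun H => d₁.fst * S₂ H + S₁ H * d₂.fst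
    + (1 - H) * (l₁ * ((3 - H) / 3) + (1 - H) * (d₁.snd + (1 - H) * S₁ H))
      * (l₂ * ((3 - H) / 3) + (1 - H) * (d₂.snd + (1 - H) * S₂ H)), by fun_prop, ?_⟩
  filter_upwards [hy₁, hy₂] with H h₁ h₂
  rw [h₁, h₂, TrivSqZeroExt.fst_mul, DualNumber.snd_mul, one_sub_uhat_div]
  ring

theorem smul (c : ℂ) (h : HasCriticalExpansion y d) :
    HasCriticalExpansion (fun H => c * y H) (c • d) := by
  simpa only [TrivSqZeroExt.inl_mul_eq_smul] using (hasCriticalExpansion_const c).mul h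

theorem sub (h₁ : HasCriticalExpansion y₁ d₁) (h₂ : HasCriticalExpansion y₂ d₂) :
    HasCriticalExpansion (fun H => y₁ H - y₂ H) (d₁ - d₂) := by
  simpa only [neg_smul, one_smul, neg_one_mul, ← sub_eq_add_neg] using h₁.add (h₂.smul (-1))

theorem sum {ι : Type*} {s : Finset ι} {y : ι → ℂ → ℂ} {d : ι → ℂ[ε]}
    (h : ∀ i ∈ s, HasCriticalExpansion (y i) (d i)) :
    HasCriticalExpansion (fun H => ∑ i ∈ s, y i H) (∑ i ∈ s, d i) := by
  classical
  induction s using Finset.induction_on with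
  | empty => simpa using hasCriticalExpansion_const 0
  | insert i s hi ih =>
    simp only [Finset.sum_insert hi]
    exact (h i (s.mem_insert_self i)).add (ih fun j hj => h j (Finset.mem_insert_of_mem hj))

theorem of_uhat_mul {c : ℂ} (h : HasCriticalExpansion (fun H => uhat H * y H) d)
    (hy : Tendsto y (𝓝[≠] 0) (𝓝 c)) : HasCriticalExpansion y ((uc : ℂ)⁻¹ • d) := by
  obtain ⟨l, S, hS, hexp⟩ := h
  have hu := uc_ne_zero
  set R : ℂ → ℂ := fun H => S H + (l + d.fst) * ((1 - H) * ((3 - H) / 3) ^ 2)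
    + d.snd * ((1 - H) ^ 2 * ((3 - H) / 3)) with hR
  have hsplit (H) : d.fst + l * (1 - uhat H / uc) + d.snd * (1 - H) ^ 4 + (1 - H) ^ 5 * S H
      = uhat H * (d.fst / uc + (l + d.fst) / uc * (1 - uhat H / uc) + d.snd / uc * (1 - H) ^ 4)
        + (1 - H) ^ 5 * R H := by
    have huhat : uhat H = uc * (1 - (1 - H) ^ 3 * ((3 - H) / 3)) := by
      rw [← one_sub_uhat_div]
      field_simp
      ring
    rw [one_sub_uhat_div, huhat, hR]
    field_simp
    ring
  have hRd : DifferentiableOn ℂ R uhatDomain := by fun_prop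
  have hR0 : R 0 = 0 := by
    have hlim := ((isCoordinateOn_uhat.tendsto.mono_right nhdsWithin_le_nhds).mul hy).congr' hexp
    have hcont : ContinuousAt (fun H => d.fst + l * (1 - uhat H / uc) + d.snd * (1 - H) ^ 4
        + (1 - H) ^ 5 * S H) 0 := by
      have := (hS.differentiableAt isCoordinateOn_uhat.mem_nhds_zero).continuousAt
      have := differentiable_uhat.continuous.continuousAt (x := 0)
      fun_prop
    have hval := tendsto_nhds_unique hlim (hcont.tendsto.mono_left nhdsWithin_le_nhds)
    rw [hsplit, isCoordinateOn_uhat.map_zero] at hval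
    simpa using hval.symm
  obtain ⟨Q, hQ, hRQ⟩ := isCoordinateOn_uhat.exists_eq_mul hRd hR0
  refine ⟨(l + d.fst) / uc, Q, hQ, ?_⟩
  filter_upwards [hexp, nhdsWithin_le_nhds isCoordinateOn_uhat.mem_nhds_zero,
    self_mem_nhdsWithin] with H hH hHd h0
  refine mul_left_cancel₀ (isCoordinateOn_uhat.ne_zero H hHd h0) ?_
  rw [hH, hsplit, hRQ H hHd, TrivSqZeroExt.fst_smul, TrivSqZeroExt.snd_smul]
  simp only [smul_eq_mul]
  ring

end HasCriticalExpansion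

theorem HasSeriesIn.tendsto_coeff_of_hasCriticalExpansion {f : ℂ⟦X⟧} {y : ℂ → ℂ} {d : ℂ[ε]}
    (hf : HasSeriesIn uhat f y) (hy : HasCriticalExpansion y d) :
    Tendsto (fun n : ℕ => coeff n f * uc ^ n * (n : ℂ) ^ (7 / 3 : ℂ)) atTop
      (𝓝 (d.snd / (2 / 3) ^ (4 / 3 : ℂ) * (Complex.Gamma (-(4 / 3)))⁻¹)) := by
  obtain ⟨l, S, hS, hy⟩ := hy
  have hremainder : HasSeriesIn uhat (f - C (d.fst + l) + (l / uc : ℂ) • X)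
      fun H => (1 - H) ^ 4 * (d.snd + (1 - H) * S H) := by
    refine ((hf.sub (hasSeriesIn_C _)).add (hasSeriesIn_X.const_smul _)).congr ?_
    filter_upwards [hy] with H hH
    rw [hH, smul_eq_mul]
    ring
  have hlim := hremainder.tendsto_coeff_mul_uc_pow_mul_cpow (by fun_prop)
  have hexponent : (4 / 3 + 1 : ℂ) = 7 / 3 := by norm_num
  simp only [sub_self, zero_mul, add_zero, Nat.cast_ofNat, hexponent] at hlim
  refine hlim.congr' ?_
  filter_upwards [eventually_ge_atTop 2] with n hn
  rw [map_add, map_sub, coeff_smul, coeff_C, coeff_X, if_neg (by lia), if_neg (by lia), smul_zero,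
    sub_zero, add_zero]

/-- The coefficients of the power series `F H` have expansions at `H = 1`, recorded by the power
series `d` over the dual numbers. -/
def HasCoeffExpansion (F : ℂ → ℂ⟦X⟧) (d : ℂ[ε]⟦X⟧) : Prop :=
  ∀ p, HasCriticalExpansion (fun H => coeff p (F H)) (coeff p d)

/-- The embedding of the power series over `ℂ` into those over the dual numbers. -/
noncomputable def toDualSeries : ℂ⟦X⟧ →ₐ[ℂ] ℂ[ε]⟦X⟧ :=
  mapAlgHom (TrivSqZeroExt.inlAlgHom ℂ ℂ ℂ)

theorem coeff_toDualSeries (p : ℕ) (f : ℂ⟦X⟧) :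
    coeff p (toDualSeries f) = TrivSqZeroExt.inl (coeff p f) :=
  coeff_map ..

theorem hasCoeffExpansion_const (f : ℂ⟦X⟧) : HasCoeffExpansion (fun _ => f) (toDualSeries f) :=
  fun p => by simpa only [coeff_toDualSeries] using hasCriticalExpansion_const (coeff p f)

theorem HasCriticalExpansion.hasCoeffExpansion_C {y : ℂ → ℂ} {d : ℂ[ε]}
    (hy : HasCriticalExpansion y d) : HasCoeffExpansion (fun H => C (y H)) (C d) := fun p => by
  obtain rfl | hp := eq_or_ne p 0
  · simpa only [coeff_zero_C] using hy
  · simpa only [coeff_C, if_neg hp, TrivSqZeroExt.inl_zero] using hasCriticalExpansion_const 0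

theorem coeff_zero_mul_coeff {R : Type*} [CommRing R] (f g : R⟦X⟧) (p : ℕ) :
    coeff 0 f * coeff p g = coeff p (f * g)
      - ∑ ij ∈ (antidiagonal p).erase (0, p), coeff ij.1 f * coeff ij.2 g := by
  rw [coeff_mul, ← Finset.add_sum_erase _ _ ((mem_antidiagonal (a := (0, p))).2 (zero_add p)),
    add_sub_cancel_right]

namespace HasCoeffExpansion

variable {F F₁ F₂ κ Y N : ℂ → ℂ⟦X⟧} {d d₁ d₂ κ' Y' N' : ℂ[ε]⟦X⟧}

theorem add (h₁ : HasCoeffExpansion F₁ d₁) (h₂ : HasCoeffExpansion F₂ d₂) :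
    HasCoeffExpansion (fun H => F₁ H + F₂ H) (d₁ + d₂) := fun p => by
  simpa only [map_add] using (h₁ p).add (h₂ p)

theorem sub (h₁ : HasCoeffExpansion F₁ d₁) (h₂ : HasCoeffExpansion F₂ d₂) :
    HasCoeffExpansion (fun H => F₁ H - F₂ H) (d₁ - d₂) := fun p => by
  simpa only [map_sub] using (h₁ p).sub (h₂ p)

theorem mul (h₁ : HasCoeffExpansion F₁ d₁) (h₂ : HasCoeffExpansion F₂ d₂) :
    HasCoeffExpansion (fun H => F₁ H * F₂ H) (d₁ * d₂) := fun p => by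
  simpa only [coeff_mul] using HasCriticalExpansion.sum fun ij _ => (h₁ ij.1).mul (h₂ ij.2)

theorem smul (c : ℂ) (h : HasCoeffExpansion F d) :
    HasCoeffExpansion (fun H => c • F H) (c • d) := fun p => by
  simpa only [coeff_smul, smul_eq_mul] using (h p).smul c

/-- The leading coefficient of `κ` vanishes at the origin, but a factor `û` can be divided out of
an expansion as long as the quotient has a limit there. -/
theorem of_mul_eq {b : ℂ} (hb : b ≠ 0) (hκ : HasCoeffExpansion κ κ') (hN : HasCoeffExpansion N N')
    (hκ₀ : ∀ H, coeff 0 (κ H) = b * uhat H) (hκ₀' : coeff 0 κ' = TrivSqZeroExt.inl (b * uc))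
    (hmul : ∀ᶠ H in 𝓝[≠] 0, κ H * Y H = N H) (hmul' : κ' * Y' = N')
    (hY : ∀ p, ∃ c, Tendsto (fun H => coeff p (Y H)) (𝓝[≠] 0) (𝓝 c)) :
    HasCoeffExpansion Y Y' := by
  intro p
  induction p using Nat.strong_induction_on with
  | _ p ih =>
    have hrec := (hN p).sub (HasCriticalExpansion.sum
      (s := (antidiagonal p).erase (0, p)) fun ij hij => (hκ ij.1).mul (ih ij.2 (by
        obtain ⟨hne, hij⟩ := Finset.mem_erase.1 hij
        rw [mem_antidiagonal] at hij
        by_contra! hle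
        exact hne (Prod.ext (by lia) (by lia)))))
    rw [← hmul', ← coeff_zero_mul_coeff, hκ₀', TrivSqZeroExt.inl_mul_eq_smul] at hrec
    have huhat : HasCriticalExpansion (fun H => uhat H * coeff p (Y H))
        ((uc : ℂ) • coeff p Y') := by
      have hscaled := hrec.smul b⁻¹
      rw [smul_smul, inv_mul_cancel_left₀ hb] at hscaled
      refine hscaled.congr ?_
      filter_upwards [hmul] with H hH
      rw [← hH, ← coeff_zero_mul_coeff, hκ₀, mul_assoc, inv_mul_cancel_left₀ hb]
    obtain ⟨c, hc⟩ := hY p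
    have := huhat.of_uhat_mul hc
    rwa [smul_smul, inv_mul_cancel₀ uc_ne_zero, one_smul] at this

end HasCoeffExpansion

/-! ### The functional equation -/

theorem sqrt_seven_sq : (Real.sqrt 7 : ℂ) ^ 2 = 7 := by
  exact_mod_cast Real.sq_sqrt (by norm_num : (0 : ℝ) ≤ 7)

theorem nuc_sq_sub_one_mul_tc : ((nuc : ℂ) ^ 2 - 1) * tc = 10 / 3 * uc := by
  rw [nuc, uc]
  push_cast
  linear_combination (4 * (tc : ℂ)) * sqrt_seven_sq

theorem nuc_sq_sub_one_mul_uc_sq : ((nuc : ℂ) ^ 2 - 1) * uc ^ 2 = 9 / 10 := by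
  suffices h : (nuc ^ 2 - 1) * uc ^ 2 = 9 / 10 by
    simpa using congrArg Complex.ofReal h
  have hpos : 0 < 7 + Real.sqrt 7 := by positivity
  have hpow : ((7 + Real.sqrt 7) ^ ((3 : ℝ) / 2)) ^ 2 = (7 + Real.sqrt 7) ^ 3 := by
    rw [← Real.rpow_natCast, ← Real.rpow_mul hpos.le, ← Real.rpow_natCast]
    norm_num
  have hnuc : nuc ^ 2 - 1 = 4 * (7 + Real.sqrt 7) := by
    rw [nuc]
    linear_combination 4 * Real.sq_sqrt (by norm_num : (0 : ℝ) ≤ 7)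
  rw [hnuc, uc, tc, mul_pow, div_pow, mul_pow 8, hpow, Real.sq_sqrt (by norm_num)]
  field_simp
  norm_num

section Kernel

variable {R S : Type*} [CommRing R] [Algebra ℂ R] [CommRing S] [Algebra ℂ S]

/-- The factor of `Z(u, v) - Z₀(v)` in the functional equation, where `Z₀ = Z₀(u)` and
`Z₁ = Z₁(v)`. The arguments may be numbers, power series, or power series over dual numbers. -/
noncomputable def kernel (u Z₀ v Z₁ : R) : R :=
  (nuc : ℂ) • (v * u) - u ^ 2 - (((nuc : ℂ) ^ 2 - 1) * tc) • (v * (Z₀ + u * Z₁))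

/-- The right-hand side of the functional equation, where `Z₀ = Z₀(u)`, `z₀ = Z₀(v)` and
`Z₁ = Z₁(v)`. -/
noncomputable def kernelRHS (u Z₀ v z₀ Z₁ : R) : R :=
  u ^ 2 * (z₀ - Z₀) + ((nuc : ℂ) ^ 2 - 1) • (u * v * (u ^ 2 - (tc : ℂ) • (Z₀ * Z₁)))

theorem map_kernel (φ : R →ₐ[ℂ] S) (u Z₀ v Z₁ : R) :
    φ (kernel u Z₀ v Z₁) = kernel (φ u) (φ Z₀) (φ v) (φ Z₁) := by
  simp only [kernel, map_sub, map_add, map_mul, map_pow, map_smul]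

theorem map_kernelRHS (φ : R →ₐ[ℂ] S) (u Z₀ v z₀ Z₁ : R) :
    φ (kernelRHS u Z₀ v z₀ Z₁) = kernelRHS (φ u) (φ Z₀) (φ v) (φ z₀) (φ Z₁) := by
  simp only [kernelRHS, map_sub, map_add, map_mul, map_pow, map_smul]

theorem kernel_uc_add_smul (u Z₀ Z₁ δ : R) :
    kernel u Z₀ (algebraMap ℂ R uc) (Z₁ + (1 / (20 * uc) : ℂ) • δ)
      = kernel u Z₀ (algebraMap ℂ R uc) Z₁ - (uc / 6 : ℂ) • (u * δ) := by
  have hconst : 10 / 3 * uc * (uc * (1 / (20 * uc))) = (uc / 6 : ℂ) := by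
    have := uc_ne_zero
    field_simp
    norm_num
  simp only [kernel, nuc_sq_sub_one_mul_tc, ← hconst, Algebra.smul_def, map_mul]
  ring

theorem kernelRHS_uc_add_smul (u Z₀ z₀ Z₁ δ : R) :
    kernelRHS u Z₀ (algebraMap ℂ R uc) (z₀ + (3 / 20 : ℂ) • δ) (Z₁ + (1 / (20 * uc) : ℂ) • δ)
      = kernelRHS u Z₀ (algebraMap ℂ R uc) z₀ Z₁
        + ((3 / 20 : ℂ) • u ^ 2 - (uc / 6 : ℂ) • (u * Z₀)) * δ := by
  have hconst : ((nuc : ℂ) ^ 2 - 1) * (uc * (tc * (1 / (20 * uc)))) = (uc / 6 : ℂ) := by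
    have := uc_ne_zero
    rw [mul_left_comm (uc : ℂ), ← mul_assoc, nuc_sq_sub_one_mul_tc]
    field_simp
    norm_num
  simp only [kernelRHS, ← hconst, Algebra.smul_def, map_mul]
  ring

theorem coeff_zero_kernel {Z₀ : R⟦X⟧} (hZ₀ : coeff 0 Z₀ = 1) (v Z₁ : R) :
    coeff 0 (kernel X Z₀ (C v) (C Z₁)) = -(10 / 3 * uc : ℂ) • v := by
  rw [kernel, nuc_sq_sub_one_mul_tc, map_sub, map_sub, coeff_smul, coeff_smul,
    coeff_zero_mul_X, pow_two, coeff_zero_mul_X, coeff_C_mul, map_add, coeff_zero_X_mul, hZ₀,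
    add_zero, mul_one, smul_zero, sub_zero, zero_sub, neg_smul]

end Kernel

section

variable {u : ℂ → ℂ} {U Z₀ V z₀ Z₁ : ℂ⟦X⟧} {FU FZ₀ FV Fz₀ FZ₁ : ℂ → ℂ}

theorem HasSeriesIn.kernel (hU : HasSeriesIn u U FU) (hZ₀ : HasSeriesIn u Z₀ FZ₀)
    (hV : HasSeriesIn u V FV) (hZ₁ : HasSeriesIn u Z₁ FZ₁) :
    HasSeriesIn u (kernel U Z₀ V Z₁) fun H => kernel (FU H) (FZ₀ H) (FV H) (FZ₁ H) := by
  simpa only [_root_.kernel, pow_two] using (((hV.mul hU).const_smul _).sub (hU.mul hU)).sub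
    ((hV.mul (hZ₀.add (hU.mul hZ₁))).const_smul _)

theorem HasSeriesIn.kernelRHS (hU : HasSeriesIn u U FU) (hZ₀ : HasSeriesIn u Z₀ FZ₀)
    (hV : HasSeriesIn u V FV) (hz₀ : HasSeriesIn u z₀ Fz₀) (hZ₁ : HasSeriesIn u Z₁ FZ₁) :
    HasSeriesIn u (kernelRHS U Z₀ V z₀ Z₁)
      fun H => kernelRHS (FU H) (FZ₀ H) (FV H) (Fz₀ H) (FZ₁ H) := by
  simpa only [_root_.kernelRHS, pow_two] using ((hU.mul hU).mul (hz₀.sub hZ₀)).add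
    (((hU.mul hV).mul ((hU.mul hU).sub ((hZ₀.mul hZ₁).const_smul _))).const_smul _)

end

section

variable {U Z₀ V z₀ Z₁ : ℂ → ℂ⟦X⟧} {dU dZ₀ dV dz₀ dZ₁ : ℂ[ε]⟦X⟧}

theorem HasCoeffExpansion.kernel (hU : HasCoeffExpansion U dU) (hZ₀ : HasCoeffExpansion Z₀ dZ₀)
    (hV : HasCoeffExpansion V dV) (hZ₁ : HasCoeffExpansion Z₁ dZ₁) :
    HasCoeffExpansion (fun K => kernel (U K) (Z₀ K) (V K) (Z₁ K)) (kernel dU dZ₀ dV dZ₁) := by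
  simpa only [_root_.kernel, pow_two] using (((hV.mul hU).smul _).sub (hU.mul hU)).sub
    ((hV.mul (hZ₀.add (hU.mul hZ₁))).smul _)

theorem HasCoeffExpansion.kernelRHS (hU : HasCoeffExpansion U dU)
    (hZ₀ : HasCoeffExpansion Z₀ dZ₀) (hV : HasCoeffExpansion V dV)
    (hz₀ : HasCoeffExpansion z₀ dz₀) (hZ₁ : HasCoeffExpansion Z₁ dZ₁) :
    HasCoeffExpansion (fun K => kernelRHS (U K) (Z₀ K) (V K) (z₀ K) (Z₁ K))
      (kernelRHS dU dZ₀ dV dz₀ dZ₁) := by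
  simpa only [_root_.kernelRHS, pow_two] using ((hU.mul hU).mul (hz₀.sub hZ₀)).add
    (((hU.mul hV).mul ((hU.mul hU).sub ((hZ₀.mul hZ₁).smul _))).smul _)

end

theorem uc_mul_Z1hat_one : 10 / 3 * uc * Z1hat 1 = Real.sqrt 7 - 2 := by
  have := uc_ne_zero
  rw [Z1hat_one]
  field_simp

theorem kernel_uhat_uc (H : ℂ) : kernel (uhat H) (Z0hat H) uc (Z1hat 1)
    = -(uc ^ 2 / 9 * cubicFactor H * (1 - H) ^ 3 * (3 - 3 * H + H ^ 2)) := by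
  have hnuc : (nuc : ℂ) = 1 + 2 * Real.sqrt 7 := by
    rw [nuc]
    push_cast
    rfl
  rw [kernel, nuc_sq_sub_one_mul_tc, hnuc]
  simp only [smul_eq_mul, uhat, Z0hat, cubicFactor]
  linear_combination
    (-(uc ^ 2 / 3) * H * (10 - 12 * H + 6 * H ^ 2 - H ^ 3) : ℂ) * uc_mul_Z1hat_one

theorem kernelRHS_uhat_uc (H : ℂ) : kernelRHS (uhat H) (Z0hat H) uc (Z0hat 1) (Z1hat 1)
    = uc ^ 2 / 9 * H * cubicFactor H * (H * cubicFactor H * (Z0hat 1 - Z0hat H)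
      + 3 / 10 * (H * cubicFactor H) ^ 2 - 3 * (Real.sqrt 7 - 2) * Z0hat H) := by
  simp only [kernelRHS, smul_eq_mul, uhat_eq]
  linear_combination (uc ^ 2 * (H * cubicFactor H / 3) ^ 3 : ℂ) * nuc_sq_sub_one_mul_uc_sq
    - (uc ^ 2 * H * cubicFactor H / 3 * Z0hat H * Z1hat 1 : ℂ) * nuc_sq_sub_one_mul_tc
    - (uc ^ 2 * H * cubicFactor H / 3 * Z0hat H : ℂ) * uc_mul_Z1hat_one

theorem two_thirds_cpow_mul_Ahat (H : ℂ) : (2 / 3 : ℂ) ^ (4 / 3 : ℂ) * Ahat H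
    = 3 / 20 * ((9 - 8 * H + 3 * H ^ 2) / (3 - 3 * H + H ^ 2) ^ 2) := by
  have hreal : (2 / 3 : ℝ) ^ ((4 : ℝ) / 3) * (3 / 2 : ℝ) ^ ((7 : ℝ) / 3) = 3 / 2 := by
    rw [show (2 / 3 : ℝ) = (3 / 2)⁻¹ by norm_num, Real.inv_rpow (by norm_num),
      ← Real.rpow_neg (by norm_num), ← Real.rpow_add (by norm_num)]
    norm_num
  have hcomplex : (2 / 3 : ℂ) ^ (4 / 3 : ℂ) * (((3 / 2 : ℝ) ^ ((7 : ℝ) / 3) : ℝ) : ℂ) = 3 / 2 := by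
    have hcast : (2 / 3 : ℂ) ^ (4 / 3 : ℂ) = ((2 / 3 : ℝ) ^ ((4 : ℝ) / 3) : ℝ) := by
      rw [Complex.ofReal_cpow (by norm_num)]
      push_cast
      rfl
    rw [hcast, ← Complex.ofReal_mul, hreal]
    push_cast
    rfl
  rw [Ahat]
  linear_combination 1 / 10 * ((9 - 8 * H + 3 * H ^ 2) / (3 - 3 * H + H ^ 2) ^ 2) * hcomplex

theorem kernel_uhat_identity {H : ℂ} (hH : 3 - 3 * H + H ^ 2 ≠ 0) :
    kernel (uhat H) (Z0hat H) uc (Z1hat 1) ^ 2 * ((2 / 3) ^ (4 / 3 : ℂ) * Ahat H - 3 / 20)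
      = kernel (uhat H) (Z0hat H) uc (Z1hat 1)
          * (3 / 20 * uhat H ^ 2 - uc / 6 * (uhat H * Z0hat H))
        + uc / 6 * (uhat H * kernelRHS (uhat H) (Z0hat H) uc (Z0hat 1) (Z1hat 1)) := by
  have hsquare : kernel (uhat H) (Z0hat H) uc (Z1hat 1) ^ 2
      * ((2 / 3) ^ (4 / 3 : ℂ) * Ahat H - 3 / 20) = uc ^ 4 / 540 * cubicFactor H ^ 2
        * (1 - H) ^ 6 * (9 - 8 * H + 3 * H ^ 2 - (3 - 3 * H + H ^ 2) ^ 2) := by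
    rw [kernel_uhat_uc, two_thirds_cpow_mul_Ahat]
    linear_combination 3 / 20 * (uc ^ 2 / 9 * cubicFactor H * (1 - H) ^ 3) ^ 2
      * div_mul_cancel₀ (9 - 8 * H + 3 * H ^ 2) (pow_ne_zero 2 hH)
  rw [hsquare, kernel_uhat_uc, kernelRHS_uhat_uc, uhat_eq]
  simp only [Z0hat, cubicFactor]
  linear_combination (uc ^ 4 / 540 * (10 - 12 * H + 6 * H ^ 2 - H ^ 3) ^ 3 * H ^ 3 : ℂ)
    * sqrt_seven_sq

theorem algebraMap_eq_C (c : ℂ) : algebraMap ℂ ℂ⟦X⟧ c = C c := rfl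

theorem toDualSeries_X : toDualSeries X = X := map_X _

theorem C_inl_add_smul_eps (a b : ℂ) : (C (TrivSqZeroExt.inl a + b • ε) : ℂ[ε]⟦X⟧)
    = algebraMap ℂ ℂ[ε]⟦X⟧ a + b • C ε := by
  rw [map_add, PowerSeries.algebraMap_apply, TrivSqZeroExt.algebraMap_eq_inl]
  congr 1
  ext1 p
  by_cases hp : p = 0 <;> simp [coeff_C, hp]

theorem coeff_zero_eq_one_of_hasSeriesIn {Z₀ : ℂ⟦X⟧} (hZ₀ : HasSeriesIn uhat Z₀ Z0hat) :
    coeff 0 Z₀ = 1 := by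
  have hcont : ContinuousAt Z0hat 0 := by unfold Z0hat; fun_prop
  rw [tendsto_nhds_unique (hZ₀.tendsto isCoordinateOn_uhat.tendsto)
    (hcont.tendsto.mono_left nhdsWithin_le_nhds), Z0hat]
  norm_num

theorem kernel_series_identity {Z₀ A : ℂ⟦X⟧} (hZ₀ : HasSeriesIn uhat Z₀ Z0hat)
    (hA : HasSeriesIn uhat A Ahat) :
    kernel X Z₀ (C (uc : ℂ)) (C (Z1hat 1)) ^ 2 * ((2 / 3 : ℂ) ^ (4 / 3 : ℂ) • A - C (3 / 20))
      = kernel X Z₀ (C (uc : ℂ)) (C (Z1hat 1))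
          * ((3 / 20 : ℂ) • X ^ 2 - (uc / 6 : ℂ) • (X * Z₀))
        + (uc / 6 : ℂ) • (X * kernelRHS X Z₀ (C (uc : ℂ)) (C (Z0hat 1)) (C (Z1hat 1))) := by
  have hX : HasSeriesIn uhat X uhat := hasSeriesIn_X
  have hκ := hX.kernel hZ₀ (hasSeriesIn_C uc) (hasSeriesIn_C (Z1hat 1))
  have hN := hX.kernelRHS hZ₀ (hasSeriesIn_C uc) (hasSeriesIn_C (Z0hat 1))
    (hasSeriesIn_C (Z1hat 1))
  rw [pow_two, pow_two]
  refine HasSeriesIn.unique (((hκ.mul hκ).mul ((hA.const_smul _).sub (hasSeriesIn_C _))).congr ?_)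
    ((hκ.mul (((hX.mul hX).const_smul _).sub ((hX.mul hZ₀).const_smul _))).add
      ((hX.mul hN).const_smul _)) isCoordinateOn_uhat.tendsto
  have hne : ∀ᶠ H in 𝓝 (0 : ℂ), 3 - 3 * H + H ^ 2 ≠ 0 :=
    ContinuousAt.eventually_ne (by fun_prop) (by norm_num)
  filter_upwards [nhdsWithin_le_nhds hne] with H hH
  simpa only [smul_eq_mul, pow_two] using kernel_uhat_identity hH

theorem exists_kernel_mul_eq {Z₀ A : ℂ⟦X⟧} (hZ₀ : HasSeriesIn uhat Z₀ Z0hat)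
    (hA : HasSeriesIn uhat A Ahat) :
    ∃ Y : ℂ⟦X⟧,
      kernel X Z₀ (C (uc : ℂ)) (C (Z1hat 1)) * Y
        = kernelRHS X Z₀ (C (uc : ℂ)) (C (Z0hat 1)) (C (Z1hat 1)) ∧
      kernel X Z₀ (C (uc : ℂ)) (C (Z1hat 1)) * ((2 / 3 : ℂ) ^ (4 / 3 : ℂ) • A - C (3 / 20))
        = (3 / 20 : ℂ) • X ^ 2 - (uc / 6 : ℂ) • (X * Z₀) + (uc / 6 : ℂ) • (X * Y) := by
  have hcoeff := coeff_zero_kernel (coeff_zero_eq_one_of_hasSeriesIn hZ₀) uc (Z1hat 1)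
  have hidentity := kernel_series_identity hZ₀ hA
  set κ := kernel X Z₀ (C (uc : ℂ)) (C (Z1hat 1))
  set N := kernelRHS X Z₀ (C (uc : ℂ)) (C (Z0hat 1)) (C (Z1hat 1))
  have hκ : constantCoeff κ ≠ 0 := by
    rw [← coeff_zero_eq_constantCoeff_apply, hcoeff]
    simp [uc_pos.ne']
  have hY : κ * (κ⁻¹ * N) = N := by rw [← mul_assoc, PowerSeries.mul_inv_cancel _ hκ, one_mul]
  refine ⟨κ⁻¹ * N, hY, mul_left_cancel₀ (a := κ) (fun h => hκ (by rw [h, map_zero])) ?_⟩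
  rw [← mul_assoc, ← pow_two, hidentity, mul_add, mul_smul_comm _ κ (X * _), mul_left_comm κ X, hY]

/-- The coefficient of `ε` in the solution of the kernel equation over the dual numbers is `A`, up
to the contributions of `Z₀(v)`. -/
theorem exists_kernel_mul_eq_kernelRHS {Z₀ A : ℂ⟦X⟧} (hZ₀ : HasSeriesIn uhat Z₀ Z0hat)
    (hA : HasSeriesIn uhat A Ahat) :
    ∃ Y : ℂ⟦X⟧, kernel X (toDualSeries Z₀) (algebraMap ℂ ℂ[ε]⟦X⟧ uc)
          (algebraMap ℂ ℂ[ε]⟦X⟧ (Z1hat 1) + (1 / (20 * uc) : ℂ) • C ε)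
        * (toDualSeries Y + toDualSeries ((2 / 3 : ℂ) ^ (4 / 3 : ℂ) • A - C (3 / 20)) * C ε)
      = kernelRHS X (toDualSeries Z₀) (algebraMap ℂ ℂ[ε]⟦X⟧ uc)
          (algebraMap ℂ ℂ[ε]⟦X⟧ (Z0hat 1) + (3 / 20 : ℂ) • C ε)
          (algebraMap ℂ ℂ[ε]⟦X⟧ (Z1hat 1) + (1 / (20 * uc) : ℂ) • C ε) := by
  obtain ⟨Y, hY, hsing⟩ := exists_kernel_mul_eq hZ₀ hA
  refine ⟨Y, ?_⟩
  have hε : (C ε * C ε : ℂ[ε]⟦X⟧) = 0 := by rw [← map_mul, DualNumber.eps_mul_eps, map_zero]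
  have hY' := congrArg toDualSeries hY
  have hsing' := congrArg toDualSeries hsing
  simp only [map_mul, map_add, map_sub, map_smul, map_pow, map_kernel, map_kernelRHS,
    ← algebraMap_eq_C, AlgHom.commutes, toDualSeries_X] at hY' hsing' ⊢
  rw [kernel_uc_add_smul, kernelRHS_uc_add_smul, ← hY']
  simp only [Algebra.smul_def] at hsing' ⊢
  linear_combination C ε * hsing' - algebraMap ℂ ℂ[ε]⟦X⟧ (uc / 6) * X
    * (algebraMap ℂ ℂ[ε]⟦X⟧ ((2 / 3 : ℂ) ^ (4 / 3 : ℂ)) * toDualSeries A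
      - algebraMap ℂ ℂ[ε]⟦X⟧ (3 / 20)) * hε

theorem hasCoeffExpansion_of_kernel_mul_eq {Z₀ : ℂ⟦X⟧} {Y : ℂ → ℂ⟦X⟧} {Y' : ℂ[ε]⟦X⟧}
    (hZ₀ : HasSeriesIn uhat Z₀ Z0hat)
    (hmul : ∀ᶠ K in 𝓝[≠] 0, kernel X Z₀ (C (uhat K)) (C (Z1hat K)) * Y K
      = kernelRHS X Z₀ (C (uhat K)) (C (Z0hat K)) (C (Z1hat K)))
    (hmul' : kernel X (toDualSeries Z₀) (algebraMap ℂ ℂ[ε]⟦X⟧ uc)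
        (algebraMap ℂ ℂ[ε]⟦X⟧ (Z1hat 1) + (1 / (20 * uc) : ℂ) • C ε) * Y'
      = kernelRHS X (toDualSeries Z₀) (algebraMap ℂ ℂ[ε]⟦X⟧ uc)
          (algebraMap ℂ ℂ[ε]⟦X⟧ (Z0hat 1) + (3 / 20 : ℂ) • C ε)
          (algebraMap ℂ ℂ[ε]⟦X⟧ (Z1hat 1) + (1 / (20 * uc) : ℂ) • C ε))
    (hY : ∀ p, ∃ c, Tendsto (fun K => coeff p (Y K)) (𝓝[≠] 0) (𝓝 c)) :
    HasCoeffExpansion Y Y' := by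
  have hX : HasCoeffExpansion (fun _ => X) X := by
    simpa only [toDualSeries_X] using hasCoeffExpansion_const X
  have hu := hasCriticalExpansion_uhat.hasCoeffExpansion_C
  have hz₀ := hasCriticalExpansion_Z0hat.hasCoeffExpansion_C
  have hZ₁ := hasCriticalExpansion_Z1hat.hasCoeffExpansion_C
  have hone := coeff_zero_eq_one_of_hasSeriesIn hZ₀
  have hone' : coeff 0 (toDualSeries Z₀) = 1 := by
    rw [coeff_toDualSeries, hone, TrivSqZeroExt.inl_one]
  rw [← C_inl_add_smul_eps, ← C_inl_add_smul_eps, PowerSeries.algebraMap_apply,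
    TrivSqZeroExt.algebraMap_eq_inl] at hmul'
  exact .of_mul_eq (b := -(10 / 3 * uc)) (by simpa using uc_ne_zero)
    (hX.kernel (hasCoeffExpansion_const Z₀) hu hZ₁)
    (hX.kernelRHS (hasCoeffExpansion_const Z₀) hu hz₀ hZ₁)
    (fun K => by rw [coeff_zero_kernel hone, smul_eq_mul])
    (by rw [coeff_zero_kernel hone', ← TrivSqZeroExt.inl_smul, smul_eq_mul]) hmul hmul' hY

theorem exists_hasCriticalExpansion_coeff {Z₀ A : ℂ⟦X⟧} {W : ℂ → ℂ⟦X⟧}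
    (hZ₀ : HasSeriesIn uhat Z₀ Z0hat) (hA : HasSeriesIn uhat A Ahat)
    (hmul : ∀ᶠ K in 𝓝[≠] 0, kernel X Z₀ (C (uhat K)) (C (Z1hat K)) * (W K - C (Z0hat K))
      = kernelRHS X Z₀ (C (uhat K)) (C (Z0hat K)) (C (Z1hat K)))
    (hW : ∀ p, ∃ c, Tendsto (fun K => coeff p (W K)) (𝓝[≠] 0) (𝓝 c)) (p : ℕ) :
    ∃ d, HasCriticalExpansion (fun K => coeff p (W K)) d ∧
      d.snd = (2 / 3 : ℂ) ^ (4 / 3 : ℂ) * coeff p A := by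
  obtain ⟨Y, hY⟩ := exists_kernel_mul_eq_kernelRHS hZ₀ hA
  have hsub := hasCoeffExpansion_of_kernel_mul_eq hZ₀ hmul hY fun p => by
    obtain ⟨c, hc⟩ := hW p
    simp only [map_sub, coeff_C]
    split_ifs
    · exact ⟨_, hc.sub (hZ₀.tendsto isCoordinateOn_uhat.tendsto)⟩
    · exact ⟨_, hc.sub_const 0⟩
  refine ⟨_, ((hsub.add hasCriticalExpansion_Z0hat.hasCoeffExpansion_C) p).congr
    (.of_forall fun K => by simp only [sub_add_cancel]), ?_⟩
  rw [map_add, map_add, coeff_mul_C, coeff_toDualSeries, coeff_toDualSeries]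
  by_cases hp : p = 0 <;> simp [coeff_C, hp]

theorem summable_and_kernel_mul_eq {Z₀ : ℂ⟦X⟧} {z : ℕ → ℕ → ℂ} {v z₀ Z₁ : ℂ}
    (hZ₀ : HasSeriesIn uhat Z₀ Z0hat)
    (hZ : ∀ᶠ H in 𝓝[≠] 0, ∃ Z : ℂ,
      HasSum (fun pq : ℕ × ℕ => z pq.1 pq.2 * uhat H ^ pq.1 * v ^ pq.2) Z ∧
      kernel (uhat H) (Z0hat H) v Z₁ * (Z - z₀) = kernelRHS (uhat H) (Z0hat H) v z₀ Z₁) :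
    (∀ p, Summable fun q => z p q * v ^ q) ∧
      kernel X Z₀ (C v) (C Z₁) * (mk (fun p => ∑' q, z p q * v ^ q) - C z₀)
        = kernelRHS X Z₀ (C v) (C z₀) (C Z₁) := by
  obtain ⟨Z, hZ⟩ := hZ.choice
  obtain ⟨hsum, hseries⟩ := HasSeriesIn.of_hasSum_prod isCoordinateOn_uhat.tendsto
    (hZ.mono fun H hH => hH.1)
  refine ⟨hsum, ?_⟩
  have hκ := hasSeriesIn_X.kernel hZ₀ (hasSeriesIn_C v) (hasSeriesIn_C Z₁)
  have hN := hasSeriesIn_X.kernelRHS hZ₀ (hasSeriesIn_C v) (hasSeriesIn_C z₀) (hasSeriesIn_C Z₁)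
  exact ((hκ.mul (hseries.sub (hasSeriesIn_C z₀))).congr (hZ.mono fun H hH => hH.2)).unique hN
    isCoordinateOn_uhat.tendsto

theorem tendsto_mul_uc_pow_mul_rpow {x : ℕ → ℝ} {a : ℝ} {y : ℂ → ℂ} {d : ℂ[ε]}
    (hx : HasSeriesIn uhat (mk fun q => (x q : ℂ)) y) (hy : HasCriticalExpansion y d)
    (hd : d.snd = (2 / 3 : ℂ) ^ (4 / 3 : ℂ) * a) :
    Tendsto (fun q : ℕ => x q * uc ^ q * (q : ℝ) ^ (7 / 3 : ℝ)) atTop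
      (𝓝 (a / Real.Gamma (-4 / 3))) := by
  have hlim := hx.tendsto_coeff_of_hasCriticalExpansion hy
  have hne : (2 / 3 : ℂ) ^ (4 / 3 : ℂ) ≠ 0 := by
    rw [Complex.cpow_ne_zero_iff]
    norm_num
  have hΓ : Complex.Gamma (-(4 / 3)) = Real.Gamma (-4 / 3) := by
    rw [← Complex.Gamma_ofReal]
    norm_num
  rw [hd, mul_div_cancel_left₀ _ hne, hΓ, ← div_eq_mul_inv] at hlim
  rw [← tendsto_ofReal_iff]
  convert hlim using 2 with q
  · simp [Complex.ofReal_cpow q.cast_nonneg]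
  · simp

theorem isEquivalent_of_tendsto_mul_pow_mul_rpow {x : ℕ → ℝ} {L r s : ℝ} (hL : L ≠ 0)
    (hr : r ≠ 0) (h : Tendsto (fun n : ℕ => x n * r ^ n * (n : ℝ) ^ s) atTop (𝓝 L)) :
    x ~[atTop] fun n => L * (r ^ n)⁻¹ * (n : ℝ) ^ (-s) := by
  refine ((((isEquivalent_const_iff_tendsto hL).2 h).mul
    (.refl (u := fun n : ℕ => (r ^ n)⁻¹ * (n : ℝ) ^ (-s)))).congr_left ?_).congr_right
    (.of_forall fun n => (mul_assoc _ _ _).symm)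
  filter_upwards [eventually_gt_atTop 0] with n hn
  rw [Pi.mul_apply, Real.rpow_neg n.cast_nonneg]
  field_simp

theorem Gamma_neg_four_thirds_ne_zero : Real.Gamma (-4 / 3) ≠ 0 :=
  Real.Gamma_ne_zero fun m hm => by
    have : (3 * m : ℝ) = 4 := by linarith
    have : 3 * m = 4 := by exact_mod_cast this
    lia

theorem isEquivalent_of_kernel_mul_eq {z : ℕ → ℕ → ℝ} {a : ℕ → ℝ}
    (hZ₀ : HasSeriesIn uhat (mk fun p => (z p 0 : ℂ)) Z0hat)
    (hZ : ∀ᶠ K in 𝓝[≠] 0, ∀ᶠ H in 𝓝[≠] 0, ∃ Z : ℂ,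
      HasSum (fun pq : ℕ × ℕ => (z pq.1 pq.2 : ℂ) * uhat H ^ pq.1 * uhat K ^ pq.2) Z ∧
      kernel (uhat H) (Z0hat H) (uhat K) (Z1hat K) * (Z - Z0hat K)
        = kernelRHS (uhat H) (Z0hat H) (uhat K) (Z0hat K) (Z1hat K))
    (hA : HasSeriesIn uhat (mk fun p => (a p : ℂ)) Ahat) {p : ℕ} (ha : a p ≠ 0) :
    z p ~[atTop] fun q => a p / Real.Gamma (-4 / 3) * (uc ^ q)⁻¹ * (q : ℝ) ^ (-(7 / 3) : ℝ) := by
  have hfiber := hZ.mono fun K hK =>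
    summable_and_kernel_mul_eq (z := fun p q => (z p q : ℂ)) hZ₀ hK
  have hcoeff (p) : HasSeriesIn uhat (mk fun q => (z p q : ℂ))
      fun K => coeff p (mk fun p => ∑' q, (z p q : ℂ) * uhat K ^ q) := by
    filter_upwards [hfiber] with K hK
    simpa only [coeff_mk] using (hK.1 p).hasSum
  obtain ⟨d, hd, hsnd⟩ := exists_hasCriticalExpansion_coeff hZ₀ hA (hfiber.mono fun K hK => hK.2)
    (fun p => ⟨_, (hcoeff p).tendsto isCoordinateOn_uhat.tendsto⟩) p
  rw [coeff_mk] at hsnd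
  exact isEquivalent_of_tendsto_mul_pow_mul_rpow (div_ne_zero ha Gamma_neg_four_thirds_ne_zero)
    uc_pos.ne' (tendsto_mul_uc_pow_mul_rpow (hcoeff p) hd hsnd)

/-- for each fixed `p`, `z_{p,q} ~ (a_p/Γ(−4/3)) · u_c^{−q} · q^{−7/3}` as `q → ∞`. -/
theorem statement1
    (ρ : ℝ) (hρ : 0 < ρ)
    (z : ℕ → ℕ → ℝ) (hz_nonneg : ∀ p q, 0 ≤ z p q)
    -- `z p 0` are the Taylor coefficients of `Z₀ = Ẑ₀ ∘ û⁻¹` at `0`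
    (hz0 : ∀ H : ℂ, ‖H‖ < ρ →
      HasSum (fun p : ℕ => (z p 0 : ℂ) * uhat H ^ p) (Z0hat H))
    -- `z p q` are the Taylor coefficients at `(0,0)` of the solution `Z(u,v)` of the
    -- algebraic equation, expressed through the parametrization `u = û(H)`, `v = û(K)`
    (hZ : ∀ H K : ℂ, ‖H‖ < ρ → ‖K‖ < ρ → ∃ ZHK : ℂ,
      HasSum (fun pq : ℕ × ℕ => (z pq.1 pq.2 : ℂ) * uhat H ^ pq.1 * uhat K ^ pq.2) ZHK ∧
      ((nuc : ℂ) * uhat K * uhat H - uhat H ^ 2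
          - ((nuc : ℂ) ^ 2 - 1) * (tc : ℂ) * uhat K * (Z0hat H + uhat H * Z1hat K))
          * (ZHK - Z0hat K)
        = uhat H ^ 2 * (Z0hat K - Z0hat H)
          + ((nuc : ℂ) ^ 2 - 1) * uhat H * uhat K * (uhat H ^ 2 - (tc : ℂ) * Z0hat H * Z1hat K))
    (a : ℕ → ℝ) (ha_pos : ∀ p, 0 < a p)
    -- `a p` are the Taylor coefficients of `A = Â ∘ û⁻¹` at `0`
    (hA : ∀ H : ℂ, ‖H‖ < ρ →
      HasSum (fun p : ℕ => (a p : ℂ) * uhat H ^ p) (Ahat H))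
    :
    ∀ p : ℕ, Asymptotics.IsEquivalent Filter.atTop
      (fun q : ℕ => z p q)
      (fun q : ℕ => (a p / Real.Gamma (-4/3)) * (uc ^ q)⁻¹ * (q : ℝ) ^ (-(7:ℝ)/3)) := by
  intro p
  have hnear : ∀ᶠ H : ℂ in 𝓝[≠] 0, ‖H‖ < ρ := nhdsWithin_le_nhds
    ((continuous_norm.tendsto' 0 0 norm_zero).eventually_lt_const hρ)
  have hZ₀ : HasSeriesIn uhat (mk fun p => (z p 0 : ℂ)) Z0hat :=
    hnear.mono fun H hH => by simpa only [coeff_mk] using hz0 H hH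
  have hA₀ : HasSeriesIn uhat (mk fun p => (a p : ℂ)) Ahat :=
    hnear.mono fun H hH => by simpa only [coeff_mk] using hA H hH
  have hkernel : ∀ᶠ K in 𝓝[≠] 0, ∀ᶠ H in 𝓝[≠] 0, ∃ Z : ℂ,
      HasSum (fun pq : ℕ × ℕ => (z pq.1 pq.2 : ℂ) * uhat H ^ pq.1 * uhat K ^ pq.2) Z ∧
      kernel (uhat H) (Z0hat H) (uhat K) (Z1hat K) * (Z - Z0hat K)
        = kernelRHS (uhat H) (Z0hat H) (uhat K) (Z0hat K) (Z1hat K) := by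
    filter_upwards [hnear] with K hK
    filter_upwards [hnear] with H hH
    obtain ⟨Z, hsum, hmul⟩ := hZ H K hH hK
    refine ⟨Z, hsum, ?_⟩
    simp only [kernel, kernelRHS, smul_eq_mul]
    linear_combination hmul
  simpa only [neg_div] using isEquivalent_of_kernel_mul_eq hZ₀ hkernel hA₀ (ha_pos p).ne'
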